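/- arXiv:2510.05796 — 2 statements merged into one kernel-verified Lean document; each statement's English description precedes it below -/
import Mathlib

section
/- Let Z : LC(ℝ) → ℝ be a simple, τ-upper semicontinuous, translation invariant and dually epi-translation invariant valuation that vanishes on indicator functions of closed intervals, and let q(x) = x²/2. Then for every a > 0 and every m > 0 and every closed bounded interval J, Z(a·q + I_J) = ζ(a)·V₁(J), where ζ(a) := Z(a·q + I_{[-m,m]})/(2m); in particular this value does not depend on the choice of m. -/
open MeasureTheory Filter Topology Pointwise Asymptotics

noncomputable section

variable {E : Type*} [NormedAddCommGroup E] [NormedSpace ℝ E]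

/-- The effective domain of an extended-real-valued function. -/
def edom (u : E → EReal) : Set E := {x | u x < ⊤}

/-- `u` has Lipschitz constant `L` on the interior of its domain. -/
def LipBound (u : E → EReal) (L : ℝ) : Prop :=
  ∀ x ∈ interior (edom u), ∀ y ∈ interior (edom u),
    |(u x).toReal - (u y).toReal| ≤ L * ‖x - y‖

/-- Membership in `LC`: proper, lower semicontinuous, convex, compact domain,
Lipschitz on the interior of the domain. -/
def IsLC (u : E → EReal) : Prop :=
  (∀ x y : E, ∀ t : ℝ, 0 < t → t < 1 →
      u (t • x + (1 - t) • y) ≤ (t : EReal) * u x + ((1 - t : ℝ) : EReal) * u y) ∧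
  LowerSemicontinuous u ∧
  (∀ x, u x ≠ ⊥) ∧
  (∃ x, u x ≠ ⊤) ∧
  IsCompact (edom u) ∧
  (∃ L : ℝ, 0 < L ∧ LipBound u L)

/-- τ-convergence: epi-convergence together with uniformly bounded Lipschitz constants. -/
def TauConv (uk : ℕ → E → EReal) (u : E → EReal) : Prop :=
  (∀ k, IsLC (uk k)) ∧ IsLC u ∧
  (∀ (x : E) (xk : ℕ → E), Tendsto xk atTop (𝓝 x) →
      u x ≤ liminf (fun k => uk k (xk k)) atTop) ∧
  (∀ x : E, ∃ xk : ℕ → E, Tendsto xk atTop (𝓝 x) ∧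
      Tendsto (fun k => uk k (xk k)) atTop (𝓝 (u x))) ∧
  (∃ M : ℝ, 0 < M ∧ ∀ k, LipBound (uk k) M)

/-- Valuation property on `LC`. -/
def IsVal (Z : (E → EReal) → ℝ) : Prop :=
  ∀ u v : E → EReal, IsLC u → IsLC v → IsLC (fun x => min (u x) (v x)) →
    Z (fun x => min (u x) (v x)) + Z (fun x => max (u x) (v x)) = Z u + Z v

/-- τ-upper semicontinuity. -/
def TauUSC (Z : (E → EReal) → ℝ) : Prop :=
  ∀ (uk : ℕ → E → EReal) (u : E → EReal), TauConv uk u →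
    limsup (fun k => Z (uk k)) atTop ≤ Z u

/-- τ-continuity. -/
def TauCont (Z : (E → EReal) → ℝ) : Prop :=
  ∀ (uk : ℕ → E → EReal) (u : E → EReal), TauConv uk u →
    Tendsto (fun k => Z (uk k)) atTop (𝓝 (Z u))

/-- Translation invariance. -/
def TransInv (Z : (E → EReal) → ℝ) : Prop :=
  ∀ u : E → EReal, IsLC u → ∀ y : E, Z (fun x => u (x - y)) = Z u

/-- Dual epi-translation invariance. -/
def DualTransInv (Z : (E → EReal) → ℝ) : Prop :=
  ∀ u : E → EReal, IsLC u → ∀ (l : E →ₗ[ℝ] ℝ) (c : ℝ),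
    Z (fun x => u x + ((l x + c : ℝ) : EReal)) = Z u

/-- SL_n invariance. -/
def SLInv (Z : (E → EReal) → ℝ) : Prop :=
  ∀ u : E → EReal, IsLC u → ∀ φ : E →ₗ[ℝ] E, LinearMap.det φ = 1 →
    Z (fun x => u (φ x)) = Z u

/-- The class `Conc`. -/
def IsConc (ζ : ℝ → ℝ) : Prop :=
  (∀ t ∈ Set.Ici (0 : ℝ), 0 ≤ ζ t) ∧ ConcaveOn ℝ (Set.Ici 0) ζ ∧
  Tendsto ζ (𝓝[>] 0) (𝓝 0) ∧
  Tendsto (fun t => ζ t / t) atTop (𝓝 0)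

open Classical in
/-- `(∞-valued) indicator function` of a set. -/
noncomputable def eIndicator (K : Set E) : E → EReal := fun x =>
  if x ∈ K then (0 : EReal) else ⊤

/-- Real part of an extended-real-valued function. -/
def toRealFn (u : E → EReal) : E → ℝ := fun x => (u x).toReal

open Classical in
/-- Second derivative of `u`, set to `0` where `u` is not twice differentiable. -/
noncomputable def secondDeriv (u : ℝ → EReal) : ℝ → ℝ := fun x =>
  if DifferentiableAt ℝ (toRealFn u) x ∧ DifferentiableAt ℝ (deriv (toRealFn u)) x
  then deriv (deriv (toRealFn u)) x
  else 0

/-- The function `ζ(a) = Z(a·q + I_{[-m,m]})/(2m)`, where `q(x) = x²/2`. -/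
noncomputable def zetaOf (Z : (ℝ → EReal) → ℝ) (m : ℝ) : ℝ → ℝ := fun a =>
  Z (fun x => ((a * (x ^ 2 / 2) : ℝ) : EReal) + eIndicator (Set.Icc (-m) m) x) / (2 * m)

/-!
Cutting `[0, s + t]` at `s` shows, together with simplicity, that `t ↦ Z (a·q + I_[0,t])` is
additive: the piece over `[s, s + t]` may be moved to `[0, t]`, since a translate of a quadratic
differs from it by an affine function. An additive function that is not linear has a dense graph,
and upper semicontinuity at a shrinking interval excludes this.
-/

section Additive

theorem exists_addMonoidHom_eq_of_nonneg {G H : Type*} [AddCommGroup G] [Lattice G]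
    [AddLeftMono G] [AddCommGroup H] {f : G → H}
    (hadd : ∀ s t, 0 ≤ s → 0 ≤ t → f (s + t) = f s + f t) :
    ∃ F : G →+ H, ∀ t, 0 ≤ t → F t = f t := by
  have sub_eq_sub {s t s' t' : G} (hs : 0 ≤ s) (ht : 0 ≤ t) (hs' : 0 ≤ s') (ht' : 0 ≤ t')
      (h : s - t = s' - t') : f s - f t = f s' - f t' := by
    rw [sub_eq_sub_iff_add_eq_add] at h ⊢
    rw [← hadd s t' hs ht', ← hadd s' t hs' ht, h]
  have f_zero : f 0 = 0 := by simpa using hadd 0 0 le_rfl le_rfl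
  refine ⟨AddMonoidHom.mk' (fun x => f x⁺ - f x⁻) fun x y => ?_, fun t ht => ?_⟩
  · have hx := posPart_nonneg x
    have hx' := negPart_nonneg x
    have hy := posPart_nonneg y
    have hy' := negPart_nonneg y
    have key : f (x + y)⁺ - f (x + y)⁻ = f (x⁺ + y⁺) - f (x⁻ + y⁻) :=
      sub_eq_sub (posPart_nonneg _) (negPart_nonneg _) (add_nonneg hx hy) (add_nonneg hx' hy') <| by
        rw [add_sub_add_comm, posPart_sub_negPart, posPart_sub_negPart, posPart_sub_negPart]
    rw [key, hadd _ _ hx hy, hadd _ _ hx' hy', add_sub_add_comm]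
  · simp only [AddMonoidHom.mk'_apply, posPart_of_nonneg ht, negPart_of_nonneg ht, f_zero, sub_zero]

theorem denseRange_graph_of_mul_map_ne {F : ℝ →+ ℝ} {s t : ℝ} (h : s * F t ≠ t * F s) :
    DenseRange fun x => (x, F x) := by
  let φ : ℝ × ℝ → ℝ × ℝ := fun p => (p.1 * s + p.2 * t, p.1 * F s + p.2 * F t)
  have φ_surjective : Function.Surjective φ := by
    have hdet : s * F t - t * F s ≠ 0 := sub_ne_zero.2 h
    intro p
    -- Cramer's rule
    refine ⟨((p.1 * F t - t * p.2) / (s * F t - t * F s),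
      (s * p.2 - p.1 * F s) / (s * F t - t * F s)), Prod.ext ?_ ?_⟩ <;>
    · dsimp only [φ]
      rw [div_mul_eq_mul_div, div_mul_eq_mul_div, ← add_div, div_eq_iff hdet]
      ring
  have φ_rat_dense : DenseRange (φ ∘ Prod.map ((↑) : ℚ → ℝ) ((↑) : ℚ → ℝ)) :=
    φ_surjective.denseRange.comp (Rat.denseRange_cast.prodMap Rat.denseRange_cast) (by fun_prop)
  have map_rat_mul (q : ℚ) (x : ℝ) : F (q * x) = q * F x := by
    simpa only [Rat.smul_def] using map_rat_smul F q x
  refine φ_rat_dense.mono ?_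
  rintro _ ⟨⟨q, r⟩, rfl⟩
  exact ⟨q * s + r * t, by simp only [φ, Function.comp_apply, Prod.map, map_add, map_rat_mul]⟩

theorem addMonoidHom_apply_eq_mul_of_right_usc (F : ℝ →+ ℝ) {x : ℝ}
    (husc : ∀ (b : ℕ → ℝ) (c : ℝ), (∀ k, x ≤ b k) → Tendsto b atTop (𝓝 x) →
      Tendsto (fun k => F (b k)) atTop (𝓝 c) → c ≤ F x) (t : ℝ) :
    F t = F 1 * t := by
  by_contra hne
  have hdense : DenseRange fun y => (y, F y) :=
    denseRange_graph_of_mul_map_ne (s := 1) (t := t) (by rwa [one_mul, mul_comm])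
  have hU : IsOpen (Set.Ioi x ×ˢ (Set.univ : Set ℝ)) := isOpen_Ioi.prod isOpen_univ
  have hmem : (x, F x + 1) ∈ closure (Set.Ioi x ×ˢ (Set.univ : Set ℝ)) := by
    simp only [closure_prod_eq, closure_Ioi, closure_univ, Set.mem_prod, Set.mem_Ici, le_refl,
      Set.mem_univ, and_self]
  obtain ⟨p, hp, hplim⟩ := mem_closure_iff_seq_limit.1
    (closure_minimal (hdense.open_subset_closure_inter hU) isClosed_closure hmem)
  have hgraph (k : ℕ) : (p k).2 = F (p k).1 := by
    obtain ⟨y, hy⟩ := (hp k).2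
    simp only [← hy]
  have hle : F x + 1 ≤ F x := by
    refine husc (fun k => (p k).1) _ (fun k => (hp k).1.1.le) hplim.fst_nhds ?_
    simpa only [← hgraph] using hplim.snd_nhds
  linarith

end Additive

/-- The function `f + I_K`, that is, `f` restricted to `K` and extended by `+∞`. The elements of
`LC` used here arise in this way from a finite convex `f` and a compact convex `K`. -/
def addIndicator {X : Type*} (f : X → ℝ) (K : Set X) : X → EReal :=
  fun x => (f x : EReal) + eIndicator K x

section AddIndicator

variable {X : Type*} {f : X → ℝ} {K : Set X} {x : X}

theorem addIndicator_of_mem (f : X → ℝ) (hx : x ∈ K) : addIndicator f K x = f x := by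
  simp only [addIndicator, eIndicator, if_pos hx, add_zero]

theorem addIndicator_of_notMem (f : X → ℝ) (hx : x ∉ K) : addIndicator f K x = ⊤ := by
  simp only [addIndicator, eIndicator, if_neg hx, EReal.coe_add_top]

theorem coe_le_addIndicator (f : X → ℝ) (K : Set X) (x : X) : f x ≤ addIndicator f K x := by
  by_cases hx : x ∈ K
  · rw [addIndicator_of_mem f hx]
  · rw [addIndicator_of_notMem f hx]
    exact le_top

theorem edom_addIndicator (f : X → ℝ) (K : Set X) : edom (addIndicator f K) = K := by
  ext x
  by_cases hx : x ∈ K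
  · simp only [edom, Set.mem_ofPred_eq, addIndicator_of_mem f hx, EReal.coe_lt_top, hx]
  · simp only [edom, Set.mem_ofPred_eq, addIndicator_of_notMem f hx, lt_irrefl, hx]

theorem min_addIndicator (f : X → ℝ) (K K' : Set X) :
    (fun x => min (addIndicator f K x) (addIndicator f K' x)) = addIndicator f (K ∪ K') := by
  ext x
  by_cases hx : x ∈ K <;> by_cases hx' : x ∈ K' <;> simp [addIndicator, eIndicator, hx, hx']

theorem max_addIndicator (f : X → ℝ) (K K' : Set X) :
    (fun x => max (addIndicator f K x) (addIndicator f K' x)) = addIndicator f (K ∩ K') := by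
  ext x
  by_cases hx : x ∈ K <;> by_cases hx' : x ∈ K' <;> simp [addIndicator, eIndicator, hx, hx']

theorem lowerSemicontinuous_addIndicator [TopologicalSpace X] (hK : IsClosed K)
    (hf : ContinuousOn f K) : LowerSemicontinuous (addIndicator f K) := by
  intro x c hc
  by_cases hx : x ∈ K
  · rw [addIndicator_of_mem f hx] at hc
    have hlt : ∀ᶠ y in 𝓝[K] x, c < f y :=
      (continuous_coe_real_ereal.continuousAt.comp_continuousWithinAt (hf x hx)).eventually
        (lt_mem_nhds hc)
    filter_upwards [eventually_nhdsWithin_iff.1 hlt] with y hy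
    by_cases hyK : y ∈ K
    · exact (hy hyK).trans_le (coe_le_addIndicator f K y)
    · rw [addIndicator_of_notMem f hyK]
      exact hc.trans_le le_top
  · rw [addIndicator_of_notMem f hx] at hc
    filter_upwards [hK.isOpen_compl.mem_nhds hx] with y hy
    rwa [addIndicator_of_notMem f hy]

theorem lipBound_addIndicator [NormedAddCommGroup X] {C : NNReal}
    (hf : LipschitzOnWith C f K) :
    LipBound (addIndicator f K) C := by
  intro x hx y hy
  rw [edom_addIndicator] at hx hy
  have hx := interior_subset hx
  have hy := interior_subset hy
  rw [addIndicator_of_mem f hx, addIndicator_of_mem f hy, EReal.toReal_coe, EReal.toReal_coe]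
  simpa only [dist_eq_norm, Real.norm_eq_abs] using hf.dist_le_mul x hx y hy

end AddIndicator

section IsLC

variable {f : E → ℝ} {K : Set E}

theorem addIndicator_combo_le (hf : ConvexOn ℝ K f) (x y : E) {t : ℝ} (ht₀ : 0 < t)
    (ht₁ : t < 1) :
    addIndicator f K (t • x + (1 - t) • y) ≤
      (t : EReal) * addIndicator f K x + ((1 - t : ℝ) : EReal) * addIndicator f K y := by
  have ht₁' : 0 < 1 - t := sub_pos.2 ht₁
  have mul_ne_bot {s : ℝ} (hs : 0 < s) (z : E) : (s : EReal) * addIndicator f K z ≠ ⊥ := by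
    by_cases hz : z ∈ K
    · rw [addIndicator_of_mem f hz, ← EReal.coe_mul]
      exact EReal.coe_ne_bot _
    · rw [addIndicator_of_notMem f hz, EReal.coe_mul_top_of_pos hs]
      exact top_ne_bot
  by_cases hx : x ∈ K
  · by_cases hy : y ∈ K
    · rw [addIndicator_of_mem f hx, addIndicator_of_mem f hy,
        addIndicator_of_mem f (hf.1 hx hy ht₀.le ht₁'.le (by ring))]
      exact_mod_cast hf.2 hx hy ht₀.le ht₁'.le (by ring)
    · rw [addIndicator_of_notMem f hy, EReal.coe_mul_top_of_pos ht₁',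
        EReal.add_top_of_ne_bot (mul_ne_bot ht₀ x)]
      exact le_top
  · rw [addIndicator_of_notMem f hx, EReal.coe_mul_top_of_pos ht₀,
      EReal.top_add_of_ne_bot (mul_ne_bot ht₁' y)]
    exact le_top

theorem exists_pos_lipschitzOnWith_of_convexOn_univ [FiniteDimensional ℝ E]
    (hf : ConvexOn ℝ Set.univ f) (hK : IsCompact K) :
    ∃ C : NNReal, 0 < C ∧ LipschitzOnWith C f K := by
  obtain ⟨C, hC⟩ :=
    (hf.locallyLipschitz.locallyLipschitzOn (s := K)).exists_lipschitzOnWith_of_compact hK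
  exact ⟨C + 1, by positivity, hC.weaken le_self_add⟩

theorem isLC_addIndicator [FiniteDimensional ℝ E] (hf : ConvexOn ℝ Set.univ f)
    (hK : IsCompact K) (hKconv : Convex ℝ K) (hKne : K.Nonempty) : IsLC (addIndicator f K) := by
  obtain ⟨C, hC₀, hC⟩ := exists_pos_lipschitzOnWith_of_convexOn_univ hf hK
  obtain ⟨x₀, hx₀⟩ := hKne
  refine ⟨fun x y t => addIndicator_combo_le (hf.subset (Set.subset_univ K) hKconv) x y,
    lowerSemicontinuous_addIndicator hK.isClosed hC.continuousOn,
    fun x => ((EReal.bot_lt_coe _).trans_le (coe_le_addIndicator f K x)).ne', ⟨x₀, ?_⟩, ?_,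
    C, hC₀, lipBound_addIndicator hC⟩
  · rw [addIndicator_of_mem f hx₀]
    exact EReal.coe_ne_top _
  · rwa [edom_addIndicator]

theorem tauConv_addIndicator [FiniteDimensional ℝ E] (hf : ConvexOn ℝ Set.univ f)
    {Kk : ℕ → Set E} {B : Set E} (hKk : ∀ k, IsCompact (Kk k)) (hKkconv : ∀ k, Convex ℝ (Kk k))
    (hB : IsCompact B) (hKkB : ∀ k, Kk k ⊆ B)
    (hK : IsCompact K) (hKconv : Convex ℝ K) (hKne : K.Nonempty) (hKKk : ∀ k, K ⊆ Kk k)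
    (hout : ∀ x ∉ K, ∀ᶠ p in atTop ×ˢ 𝓝 x, p.2 ∉ Kk p.1) :
    TauConv (fun k => addIndicator f (Kk k)) (addIndicator f K) := by
  have tendsto_top {x : E} (hx : x ∉ K) {xk : ℕ → E} (hxk : Tendsto xk atTop (𝓝 x)) :
      Tendsto (fun k => addIndicator f (Kk k) (xk k)) atTop (𝓝 ⊤) :=
    tendsto_const_nhds.congr' <| ((tendsto_id.prodMk hxk).eventually (hout x hx)).mono
      fun k hk => (addIndicator_of_notMem f hk).symm
  obtain ⟨C, hC₀, hC⟩ := exists_pos_lipschitzOnWith_of_convexOn_univ hf hB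
  refine ⟨fun k => isLC_addIndicator hf (hKk k) (hKkconv k) (hKne.mono (hKKk k)),
    isLC_addIndicator hf hK hKconv hKne, fun x xk hxk => ?_, fun x => ⟨fun _ => x,
    tendsto_const_nhds, ?_⟩, C, hC₀, fun k => lipBound_addIndicator (hC.mono (hKkB k))⟩
  · by_cases hx : x ∈ K
    · have hcoe : Tendsto (fun k => (f (xk k) : EReal)) atTop (𝓝 (f x)) :=
        (continuous_coe_real_ereal.comp hf.locallyLipschitz.continuous).tendsto x |>.comp hxk
      rw [addIndicator_of_mem f hx, ← hcoe.liminf_eq]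
      exact liminf_le_liminf (.of_forall fun k => coe_le_addIndicator f (Kk k) (xk k))
    · rw [(tendsto_top hx hxk).liminf_eq]
      exact le_top
  · by_cases hx : x ∈ K
    · simp only [addIndicator_of_mem f hx, addIndicator_of_mem f (hKKk _ hx)]
      exact tendsto_const_nhds
    · rw [addIndicator_of_notMem f hx]
      exact tendsto_top hx tendsto_const_nhds

theorem tauConv_addIndicator_Icc {f : ℝ → ℝ} (hf : ConvexOn ℝ Set.univ f) {α β : ℝ}
    (hαβ : α ≤ β) {b : ℕ → ℝ} (hb : ∀ k, β ≤ b k) (hlim : Tendsto b atTop (𝓝 β)) :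
    TauConv (fun k => addIndicator f (Set.Icc α (b k))) (addIndicator f (Set.Icc α β)) := by
  obtain ⟨B, hB⟩ := hlim.bddAbove_range
  refine tauConv_addIndicator hf (fun _ => isCompact_Icc) (fun _ => convex_Icc _ _)
    (isCompact_Icc (a := α) (b := B)) (fun k => Set.Icc_subset_Icc_right (hB ⟨k, rfl⟩))
    isCompact_Icc (convex_Icc _ _) (Set.nonempty_Icc.2 hαβ)
    (fun k => Set.Icc_subset_Icc_right (hb k)) fun x hx => ?_
  rw [Set.mem_Icc, not_and_or, not_le, not_le] at hx
  rcases hx with hx | hx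
  · filter_upwards [tendsto_snd.eventually (gt_mem_nhds hx)] with p hp h
    exact hp.not_ge h.1
  · filter_upwards [(hlim.comp tendsto_fst).eventually_lt tendsto_snd hx] with p hp h
    exact hp.not_ge h.2

end IsLC

section Valuation

-- The real `limsup` of an unbounded sequence is a junk value, so `TauUSC` is informative only along
-- sequences whose values stay bounded; convergent values suffice here.
theorem TauUSC.le_of_tendsto {Z : (E → EReal) → ℝ} (husc : TauUSC Z) {uk : ℕ → E → EReal}
    {u : E → EReal} (hu : TauConv uk u) {c : ℝ}
    (hc : Tendsto (fun k => Z (uk k)) atTop (𝓝 c)) : c ≤ Z u :=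
  hc.limsup_eq ▸ husc uk u hu

theorem TransInv.eq_of_comp_sub_eq_add {Z : (E → EReal) → ℝ} (htrans : TransInv Z)
    (hdual : DualTransInv Z) {u v : E → EReal} (hu : IsLC u) (hv : IsLC v) (y : E)
    (l : E →ₗ[ℝ] ℝ) (c : ℝ) (h : ∀ x, v (x - y) = u x + ((l x + c : ℝ) : EReal)) : Z v = Z u := by
  rw [← htrans v hv y, ← hdual u hu l c]
  exact congrArg Z (funext h)

theorem IsVal.apply_addIndicator_union {Z : (E → EReal) → ℝ} [FiniteDimensional ℝ E]
    (hval : IsVal Z) {f : E → ℝ} (hf : ConvexOn ℝ Set.univ f) {K K' : Set E}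
    (hK : IsCompact K) (hKconv : Convex ℝ K) (hKne : K.Nonempty)
    (hK' : IsCompact K') (hKconv' : Convex ℝ K') (hKne' : K'.Nonempty)
    (hunion : Convex ℝ (K ∪ K')) :
    Z (addIndicator f (K ∪ K')) + Z (addIndicator f (K ∩ K')) =
      Z (addIndicator f K) + Z (addIndicator f K') := by
  rw [← min_addIndicator, ← max_addIndicator]
  refine hval _ _ (isLC_addIndicator hf hK hKconv hKne) (isLC_addIndicator hf hK' hKconv' hKne') ?_
  rw [min_addIndicator]
  exact isLC_addIndicator hf (hK.union hK') hunion hKne.inl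

variable {Z : (ℝ → EReal) → ℝ}

theorem isLC_addIndicator_Icc {f : ℝ → ℝ} (hf : ConvexOn ℝ Set.univ f) {α β : ℝ} (h : α ≤ β) :
    IsLC (addIndicator f (Set.Icc α β)) :=
  isLC_addIndicator hf isCompact_Icc (convex_Icc α β) (Set.nonempty_Icc.2 h)

theorem IsVal.apply_addIndicator_Icc_add_Icc (hval : IsVal Z)
    (hsimple : ∀ u : ℝ → EReal, IsLC u → (∃ x : ℝ, edom u = {x}) → Z u = 0)
    {f : ℝ → ℝ} (hf : ConvexOn ℝ Set.univ f) {α β γ : ℝ} (hαβ : α ≤ β) (hβγ : β ≤ γ) :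
    Z (addIndicator f (Set.Icc α β)) + Z (addIndicator f (Set.Icc β γ)) =
      Z (addIndicator f (Set.Icc α γ)) := by
  have hpoint : Z (addIndicator f {β}) = 0 :=
    hsimple _ (isLC_addIndicator hf isCompact_singleton (convex_singleton β)
      (Set.singleton_nonempty β)) ⟨β, edom_addIndicator f {β}⟩
  have hunion : Set.Icc α β ∪ Set.Icc β γ = Set.Icc α γ := Set.Icc_union_Icc_eq_Icc hαβ hβγ
  have h := hval.apply_addIndicator_union hf (K := Set.Icc α β) (K' := Set.Icc β γ)
    isCompact_Icc (convex_Icc α β) (Set.nonempty_Icc.2 hαβ)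
    isCompact_Icc (convex_Icc β γ) (Set.nonempty_Icc.2 hβγ) (hunion ▸ convex_Icc α γ)
  rw [hunion, Set.Icc_inter_Icc_eq_singleton hαβ hβγ, hpoint, add_zero] at h
  exact h.symm

end Valuation

section Quadratic

variable {Z : (ℝ → EReal) → ℝ} {a : ℝ}

theorem convexOn_quadratic (ha : 0 ≤ a) : ConvexOn ℝ Set.univ fun x : ℝ => a * (x ^ 2 / 2) := by
  have h := (even_two.convexOn_pow (𝕜 := ℝ)).smul (c := a / 2) (by positivity)
  refine h.congr fun x _ => ?_
  simp only [smul_eq_mul]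
  ring

theorem apply_quadratic_Icc_eq_Icc_zero (htrans : TransInv Z) (hdual : DualTransInv Z)
    (ha : 0 ≤ a) {α β : ℝ} (h : α ≤ β) :
    Z (addIndicator (fun x => a * (x ^ 2 / 2)) (Set.Icc α β)) =
      Z (addIndicator (fun x => a * (x ^ 2 / 2)) (Set.Icc 0 (β - α))) := by
  refine htrans.eq_of_comp_sub_eq_add hdual
    (isLC_addIndicator_Icc (convexOn_quadratic ha) (sub_nonneg.2 h))
    (isLC_addIndicator_Icc (convexOn_quadratic ha) h)
    (-α) ((a * α) • LinearMap.id) (a * (α ^ 2 / 2)) fun x => ?_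
  have hmem : x - -α ∈ Set.Icc α β ↔ x ∈ Set.Icc 0 (β - α) := by
    rw [sub_neg_eq_add, Set.mem_Icc, Set.mem_Icc, le_add_iff_nonneg_left, le_sub_iff_add_le]
  by_cases hx : x ∈ Set.Icc 0 (β - α)
  · rw [addIndicator_of_mem _ hx, addIndicator_of_mem _ (hmem.2 hx), ← EReal.coe_add,
      EReal.coe_eq_coe_iff]
    simp only [LinearMap.smul_apply, LinearMap.id_apply, smul_eq_mul]
    ring
  · rw [addIndicator_of_notMem _ hx, addIndicator_of_notMem _ (mt hmem.1 hx), EReal.top_add_coe]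

theorem exists_apply_quadratic_Icc_eq_mul_sub (hval : IsVal Z) (husc : TauUSC Z)
    (htrans : TransInv Z) (hdual : DualTransInv Z)
    (hsimple : ∀ u : ℝ → EReal, IsLC u → (∃ x : ℝ, edom u = {x}) → Z u = 0) (ha : 0 ≤ a) :
    ∃ c : ℝ, ∀ α β : ℝ, α ≤ β →
      Z (addIndicator (fun x => a * (x ^ 2 / 2)) (Set.Icc α β)) = c * (β - α) := by
  let f (t : ℝ) : ℝ := Z (addIndicator (fun x => a * (x ^ 2 / 2)) (Set.Icc 0 t))
  have f_add (s t : ℝ) (hs : 0 ≤ s) (ht : 0 ≤ t) : f (s + t) = f s + f t := by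
    have hst : s ≤ s + t := le_add_of_nonneg_right ht
    dsimp only [f]
    rw [← hval.apply_addIndicator_Icc_add_Icc hsimple (convexOn_quadratic ha) hs hst,
      apply_quadratic_Icc_eq_Icc_zero htrans hdual ha hst, add_sub_cancel_left]
  obtain ⟨F, hF⟩ := exists_addMonoidHom_eq_of_nonneg f_add
  have F_linear : ∀ t, F t = F 1 * t := by
    refine addMonoidHom_apply_eq_mul_of_right_usc F (x := 0) fun b c hb hlim hc => ?_
    rw [hF 0 le_rfl]
    exact husc.le_of_tendsto (tauConv_addIndicator_Icc (convexOn_quadratic ha) le_rfl hb hlim)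
      (hc.congr fun k => hF (b k) (hb k))
  refine ⟨F 1, fun α β h => ?_⟩
  rw [apply_quadratic_Icc_eq_Icc_zero htrans hdual ha h, ← F_linear, hF _ (sub_nonneg.2 h)]

end Quadratic

theorem stmt11_general (Z : (ℝ → EReal) → ℝ)
    (hval : IsVal Z) (husc : TauUSC Z) (htrans : TransInv Z) (hdual : DualTransInv Z)
    (hsimple : ∀ u : ℝ → EReal, IsLC u → (∃ x : ℝ, edom u = {x}) → Z u = 0) :
    ∀ a : ℝ, 0 ≤ a → ∀ m : ℝ, 0 < m →
      (∀ α β : ℝ, α ≤ β →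
        Z (fun x => ((a * (x ^ 2 / 2) : ℝ) : EReal) + eIndicator (Set.Icc α β) x) =
          zetaOf Z m a * (β - α)) ∧
      (∀ m' : ℝ, 0 < m' → zetaOf Z m a = zetaOf Z m' a) := by
  intro a ha m hm
  obtain ⟨c, hc⟩ := exists_apply_quadratic_Icc_eq_mul_sub hval husc htrans hdual hsimple ha
  have zeta_eq {m : ℝ} (hm : 0 < m) : zetaOf Z m a = c := by
    rw [zetaOf, div_eq_iff (by positivity), two_mul, ← sub_neg_eq_add m m]
    exact hc (-m) m (by linarith)
  refine ⟨fun α β h => ?_, fun m' hm' => by rw [zeta_eq hm, zeta_eq hm']⟩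
  rw [zeta_eq hm]
  exact hc α β h

/-- For a simple, τ-upper semicontinuous, translation and dually
epi-translation invariant valuation `Z` on `LC(ℝ)` vanishing on indicators of closed intervals,
`Z(a·q + I_J) = ζ(a)·V₁(J)` for every `a > 0`, `m > 0` and closed bounded interval `J`, where
`ζ(a) = Z(a·q + I_{[-m,m]})/(2m)`; in particular this value does not depend on `m`. -/
theorem stmt11 (Z : (ℝ → EReal) → ℝ)
    (hval : IsVal Z) (husc : TauUSC Z) (htrans : TransInv Z) (hdual : DualTransInv Z)
    (hsimple : ∀ u : ℝ → EReal, IsLC u → (∃ x : ℝ, edom u = {x}) → Z u = 0)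
    (hvanish : ∀ a b : ℝ, a ≤ b → Z (eIndicator (Set.Icc a b)) = 0) :
    ∀ a : ℝ, 0 < a → ∀ m : ℝ, 0 < m →
      (∀ α β : ℝ, α ≤ β →
        Z (fun x => ((a * (x ^ 2 / 2) : ℝ) : EReal) + eIndicator (Set.Icc α β) x) =
          zetaOf Z m a * (β - α)) ∧
      (∀ m' : ℝ, 0 < m' → zetaOf Z m a = zetaOf Z m' a) := by
  intro a ha
  exact stmt11_general Z hval husc htrans hdual hsimple a ha.le

end
end

section
/- Let Z : LC(ℝ) → ℝ be a simple, τ-upper semicontinuous, translation invariant and dually epi-translation invariant valuation that vanishes on indicator functions of closed intervals. Then for every u ∈ LC(ℝ), Z(u) = sup{ limsup_{n→∞} Z(v_n) : v_n ∈ PLQ(ℝ), v_n τ-converges to u }. -/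
open MeasureTheory Filter Topology Pointwise Asymptotics

noncomputable section

variable {E : Type*} [NormedAddCommGroup E] [NormedSpace ℝ E]

/-- Membership in `PLQ(ℝ)`: the domain is a finite union of closed intervals on each of which
`u` is a quadratic or affine function. -/
def IsPLQ (u : ℝ → EReal) : Prop :=
  IsLC u ∧
  ∃ (l : ℕ) (a b : Fin (l + 1) → ℝ),
    (∀ i, a i ≤ b i) ∧
    edom u = ⋃ i, Set.Icc (a i) (b i) ∧
    ∀ i, ∃ p q r : ℝ, ∀ x ∈ Set.Icc (a i) (b i),
      (u x).toReal = p * x ^ 2 + q * x + r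

/-!
By upper semicontinuity the supremum is at most `Z u`, so the point is to find `v_n ∈ PLQ(ℝ)` with
`v_n → u` and `Z v_n → Z u`. Up to a translation and an affine summand, `u` is a convex function on
some `[0, L]` with slopes in `[0, A]`. Such pieces can be concatenated, and `Z` is additive under
concatenation. It vanishes on piecewise affine functions, which are dense, so `Z ≥ 0`.

Cut `u` into short pieces. If a piece has length `ℓ` and its slope grows by at most `M * ℓ`, replace
it by a parabola followed by a line, keeping length and slopes; this costs at most `ε * ℓ`.
Otherwise there would be shrinking pieces, with ratios of slope growth to length tending to some
`t`, that all lose more; but about `1 / ℓ` copies of such a piece in a row converge to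
`x ↦ t * x ^ 2 / 2` on `[0, 1]`, which contradicts upper semicontinuity.

Replace the remaining, steep pieces by lines. Put in a row, they have slope growth at most `A` and
total length at most `A / M`, so by upper semicontinuity at a point they cost little for large `M`.
-/

section

open Set

section ExtendTop

variable {α : Type*} {f g : α → ℝ} {s t : Set α} {x : α}

open Classical in
/-- The extended-real-valued function that equals `f` on `s` and `+∞` off `s`. -/
def extendTop (f : α → ℝ) (s : Set α) : α → EReal := fun x => if x ∈ s then (f x : EReal) else ⊤

lemma extendTop_of_mem (f : α → ℝ) (hx : x ∈ s) : extendTop f s x = f x := if_pos hx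

lemma extendTop_of_notMem (f : α → ℝ) (hx : x ∉ s) : extendTop f s x = ⊤ := if_neg hx

lemma extendTop_congr (h : Set.EqOn f g s) : extendTop f s = extendTop g s := by
  funext x
  by_cases hx : x ∈ s
  · rw [extendTop_of_mem f hx, extendTop_of_mem g hx, h hx]
  · rw [extendTop_of_notMem f hx, extendTop_of_notMem g hx]

lemma coe_le_extendTop (f : α → ℝ) (s : Set α) (x : α) : (f x : EReal) ≤ extendTop f s x := by
  by_cases hx : x ∈ s
  · rw [extendTop_of_mem f hx]
  · rw [extendTop_of_notMem f hx]
    exact le_top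

lemma extendTop_ne_bot (f : α → ℝ) (s : Set α) (x : α) : extendTop f s x ≠ ⊥ :=
  ne_bot_of_le_ne_bot (EReal.coe_ne_bot _) (coe_le_extendTop f s x)

lemma min_extendTop (f : α → ℝ) (s t : Set α) :
    (fun x => min (extendTop f s x) (extendTop f t x)) = extendTop f (s ∪ t) := by
  funext x
  by_cases hs : x ∈ s <;> by_cases ht : x ∈ t <;> simp [extendTop, hs, ht]

lemma max_extendTop (f : α → ℝ) (s t : Set α) :
    (fun x => max (extendTop f s x) (extendTop f t x)) = extendTop f (s ∩ t) := by
  funext x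
  by_cases hs : x ∈ s <;> by_cases ht : x ∈ t <;> simp [extendTop, hs, ht]

lemma extendTop_add_coe (f g : α → ℝ) (s : Set α) :
    (fun x => extendTop f s x + (g x : EReal)) = extendTop (fun x => f x + g x) s := by
  funext x
  by_cases hx : x ∈ s <;> simp [extendTop, hx]

lemma edom_extendTop (f : α → ℝ) (s : Set α) : edom (extendTop f s) = s := by
  ext x
  by_cases hx : x ∈ s <;> simp [edom, extendTop, hx]

lemma eIndicator_eq_extendTop (s : Set α) : eIndicator s = extendTop 0 s := by
  funext x
  by_cases hx : x ∈ s <;> simp [eIndicator, extendTop, hx]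

end ExtendTop

/-! ### Relative subgradients -/

/-- At each point of `s` the function `f` has a subgradient relative to `s` that lies in `T`.
For an interval `s` this says that `f` is convex on `s` with slopes in `T`. -/
def HasSubgradientsIn (f : ℝ → ℝ) (s T : Set ℝ) : Prop :=
  ∀ x ∈ s, ∃ p ∈ T, ∀ y ∈ s, f x + p * (y - x) ≤ f y

/-- The translate of `f` by `y`, plus the affine function `x ↦ k * x + c`. -/
def affineShift (f : ℝ → ℝ) (y k c : ℝ) : ℝ → ℝ := fun x => f (x - y) + k * x + c

lemma continuous_affineShift {f : ℝ → ℝ} (hf : Continuous f) (y k c : ℝ) :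
    Continuous (affineShift f y k c) := by
  unfold affineShift
  fun_prop

namespace HasSubgradientsIn

variable {f g : ℝ → ℝ} {s s' T T' : Set ℝ} {a b c m p M K x y : ℝ}

lemma mono (h : HasSubgradientsIn f s T) (hs : s' ⊆ s) (hT : T ⊆ T') :
    HasSubgradientsIn f s' T' := fun x hx =>
  let ⟨p, hp, hpx⟩ := h x (hs hx)
  ⟨p, hT hp, fun y hy => hpx y (hs hy)⟩

lemma congr (h : HasSubgradientsIn f s T) (hfg : EqOn f g s) : HasSubgradientsIn g s T := by
  intro x hx
  obtain ⟨p, hp, hpx⟩ := h x hx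
  exact ⟨p, hp, fun y hy => hfg hx ▸ hfg hy ▸ hpx y hy⟩

lemma affineShift (h : HasSubgradientsIn f (Icc a b) (Icc m M)) (y k c : ℝ) :
    HasSubgradientsIn (affineShift f y k c) (Icc (a + y) (b + y)) (Icc (m + k) (M + k)) := by
  intro x hx
  obtain ⟨p, hp, hpx⟩ := h (x - y) ⟨by linarith [hx.1], by linarith [hx.2]⟩
  refine ⟨p + k, ⟨by linarith [hp.1], by linarith [hp.2]⟩, fun z hz => ?_⟩
  have := hpx (z - y) ⟨by linarith [hz.1], by linarith [hz.2]⟩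
  simp only [_root_.affineShift]
  linarith

lemma mul_sub_le (h : HasSubgradientsIn f s (Icc m M)) (hx : x ∈ s) (hy : y ∈ s) (hxy : x ≤ y) :
    m * (y - x) ≤ f y - f x := by
  obtain ⟨p, hp, hpx⟩ := h x hx
  linarith [hpx y hy, mul_le_mul_of_nonneg_right hp.1 (sub_nonneg.2 hxy)]

lemma sub_le_mul (h : HasSubgradientsIn f s (Icc m M)) (hx : x ∈ s) (hy : y ∈ s) (hxy : x ≤ y) :
    f y - f x ≤ M * (y - x) := by
  obtain ⟨p, hp, hpy⟩ := h y hy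
  linarith [hpy x hx, mul_le_mul_of_nonneg_right hp.2 (sub_nonneg.2 hxy)]

lemma abs_sub_le (h : HasSubgradientsIn f s (Icc (-K) K)) (hx : x ∈ s) (hy : y ∈ s) :
    |f x - f y| ≤ K * |x - y| := by
  wlog hxy : x ≤ y generalizing x y
  · rw [abs_sub_comm, abs_sub_comm x]
    exact this hy hx (le_of_not_ge hxy)
  rw [abs_sub_comm, abs_sub_comm x, abs_of_nonneg (sub_nonneg.2 hxy), abs_le]
  exact ⟨by linarith [h.mul_sub_le hx hy hxy], h.sub_le_mul hx hy hxy⟩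

lemma lipBound (h : HasSubgradientsIn f s (Icc (-K) K)) : LipBound (extendTop f s) K := by
  intro x hx y hy
  rw [edom_extendTop] at hx hy
  have hxs := interior_subset hx
  have hys := interior_subset hy
  simpa only [extendTop_of_mem f hxs, extendTop_of_mem f hys, EReal.toReal_coe,
    Real.norm_eq_abs] using
    h.abs_sub_le hxs hys

lemma extendTop_combo_le (h : HasSubgradientsIn f s T) (hs : Convex ℝ s) (x y : ℝ) {t : ℝ}
    (ht₀ : 0 < t) (ht₁ : t < 1) :
    extendTop f s (t • x + (1 - t) • y) ≤
      (t : EReal) * extendTop f s x + ((1 - t : ℝ) : EReal) * extendTop f s y := by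
  have ht₁' : 0 < 1 - t := sub_pos.2 ht₁
  have mul_ne_bot {r : ℝ} (hr : 0 < r) (z : ℝ) : (r : EReal) * extendTop f s z ≠ ⊥ := by
    by_cases hz : z ∈ s
    · rw [extendTop_of_mem f hz, ← EReal.coe_mul]
      exact EReal.coe_ne_bot _
    · rw [extendTop_of_notMem f hz, EReal.coe_mul_top_of_pos hr]
      exact top_ne_bot
  by_cases hx : x ∈ s
  swap
  · rw [extendTop_of_notMem f hx, EReal.coe_mul_top_of_pos ht₀,
      EReal.top_add_of_ne_bot (mul_ne_bot ht₁' y)]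
    exact le_top
  by_cases hy : y ∈ s
  swap
  · rw [extendTop_of_notMem f hy, EReal.coe_mul_top_of_pos ht₁',
      EReal.add_top_of_ne_bot (mul_ne_bot ht₀ x)]
    exact le_top
  have hz : t • x + (1 - t) • y ∈ s := hs hx hy ht₀.le ht₁'.le (by ring)
  obtain ⟨p, -, hp⟩ := h _ hz
  rw [extendTop_of_mem f hz, extendTop_of_mem f hx, extendTop_of_mem f hy]
  norm_cast
  have hpx := mul_le_mul_of_nonneg_left (hp x hx) ht₀.le
  have hpy := mul_le_mul_of_nonneg_left (hp y hy) ht₁'.le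
  simp only [smul_eq_mul] at hpx hpy ⊢
  linarith

lemma lowerSemicontinuous_extendTop (h : HasSubgradientsIn f s T) (hs : IsClosed s) :
    LowerSemicontinuous (extendTop f s) := by
  intro x c hc
  by_cases hx : x ∈ s
  · obtain ⟨p, -, hp⟩ := h x hx
    have hcont : Continuous fun y => ((f x + p * (y - x) : ℝ) : EReal) :=
      continuous_coe_real_ereal.comp (by fun_prop)
    have hlt : c < ((f x + p * (x - x) : ℝ) : EReal) := by
      rwa [sub_self, mul_zero, add_zero, ← extendTop_of_mem f hx]
    filter_upwards [hcont.continuousAt.eventually (lt_mem_nhds hlt)] with y hy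
    by_cases hys : y ∈ s
    · rw [extendTop_of_mem f hys]
      exact hy.trans_le (EReal.coe_le_coe_iff.2 (hp y hys))
    · rw [extendTop_of_notMem f hys]
      exact hy.trans_le le_top
  · rw [extendTop_of_notMem f hx] at hc
    filter_upwards [hs.isOpen_compl.mem_nhds hx] with y hy
    rwa [extendTop_of_notMem f hy]

lemma isLC (h : HasSubgradientsIn f s (Icc m M)) (hconv : Convex ℝ s) (hcomp : IsCompact s)
    (hne : s.Nonempty) : IsLC (extendTop f s) := by
  refine ⟨fun x y t => h.extendTop_combo_le hconv x y,
    h.lowerSemicontinuous_extendTop hcomp.isClosed, extendTop_ne_bot f s, ?_, ?_, ?_⟩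
  · obtain ⟨x, hx⟩ := hne
    exact ⟨x, extendTop_of_mem f hx ▸ EReal.coe_ne_top _⟩
  · rwa [edom_extendTop]
  · refine ⟨max 1 (max M (-m)), by positivity, (h.mono subset_rfl ?_).lipBound⟩
    refine Icc_subset_Icc ?_ ((le_max_left _ _).trans (le_max_right _ _))
    exact neg_le.1 ((le_max_right _ _).trans (le_max_right _ _))

lemma isLC_Icc (h : HasSubgradientsIn f (Icc a b) (Icc m M)) (hab : a ≤ b) :
    IsLC (extendTop f (Icc a b)) :=
  h.isLC (convex_Icc a b) isCompact_Icc (nonempty_Icc.2 hab)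

lemma glue (h₁ : HasSubgradientsIn f (Icc a c) (Icc m p))
    (h₂ : HasSubgradientsIn f (Icc c b) (Icc p M)) (hac : a ≤ c) (hcb : c ≤ b) :
    HasSubgradientsIn f (Icc a b) (Icc m M) := by
  have hc₁ : c ∈ Icc a c := right_mem_Icc.2 hac
  have hc₂ : c ∈ Icc c b := left_mem_Icc.2 hcb
  have hp₁ : m ≤ p := let ⟨_, hq, _⟩ := h₁ c hc₁; hq.1.trans hq.2
  have hp₂ : p ≤ M := let ⟨_, hq, _⟩ := h₂ c hc₂; hq.1.trans hq.2
  intro x hx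
  rcases le_total x c with hxc | hcx
  · obtain ⟨q, hq, hqx⟩ := h₁ x ⟨hx.1, hxc⟩
    refine ⟨q, ⟨hq.1, hq.2.trans hp₂⟩, fun y hy => ?_⟩
    rcases le_total y c with hyc | hcy
    · exact hqx y ⟨hy.1, hyc⟩
    · linarith [hqx c hc₁, h₂.mul_sub_le hc₂ ⟨hcy, hy.2⟩ hcy,
        mul_le_mul_of_nonneg_right hq.2 (sub_nonneg.2 hcy)]
  · obtain ⟨q, hq, hqx⟩ := h₂ x ⟨hcx, hx.2⟩
    refine ⟨q, ⟨hp₁.trans hq.1, hq.2⟩, fun y hy => ?_⟩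
    rcases le_total c y with hcy | hyc
    · exact hqx y ⟨hcy, hy.2⟩
    · linarith [hqx c hc₂, h₁.sub_le_mul ⟨hy.1, hyc⟩ hc₁ hyc,
        mul_le_mul_of_nonneg_right hq.1 (sub_nonneg.2 hyc)]

lemma split (h : HasSubgradientsIn f (Icc a b) (Icc m M)) (hc : c ∈ Icc a b) :
    ∃ p ∈ Icc m M, HasSubgradientsIn f (Icc a c) (Icc m p) ∧
      HasSubgradientsIn f (Icc c b) (Icc p M) := by
  obtain ⟨p, hp, hpc⟩ := h c hc
  refine ⟨p, hp, fun x hx => ?_, fun x hx => ?_⟩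
  · obtain ⟨q, hq, hqx⟩ := h x ⟨hx.1, hx.2.trans hc.2⟩
    rcases hx.2.eq_or_lt with rfl | hxc
    · exact ⟨p, ⟨hp.1, le_rfl⟩, fun y hy => hpc y ⟨hy.1, hy.2.trans hc.2⟩⟩
    · refine ⟨q, ⟨hq.1, ?_⟩, fun y hy => hqx y ⟨hy.1, hy.2.trans hc.2⟩⟩
      have := hpc x ⟨hx.1, hx.2.trans hc.2⟩
      have := hqx c hc
      exact le_of_mul_le_mul_right (by linarith) (sub_pos.2 hxc)
  · obtain ⟨q, hq, hqx⟩ := h x ⟨hc.1.trans hx.1, hx.2⟩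
    rcases hx.1.eq_or_lt with rfl | hcx
    · exact ⟨p, ⟨le_rfl, hp.2⟩, fun y hy => hpc y ⟨hc.1.trans hy.1, hy.2⟩⟩
    · refine ⟨q, ⟨?_, hq.2⟩, fun y hy => hqx y ⟨hc.1.trans hy.1, hy.2⟩⟩
      have := hpc x ⟨hc.1.trans hx.1, hx.2⟩
      have := hqx c hc
      exact le_of_mul_le_mul_right (by linarith) (sub_pos.2 hcx)

end HasSubgradientsIn

/-! ### τ-convergence -/

section TauConvergence

variable {a b e x : ℕ → ℝ} {f : ℕ → ℝ → ℝ} {g : ℝ → ℝ} {a₀ b₀ x₀ K : ℝ}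

lemma eventually_extendTop_eq_top (ha : Tendsto a atTop (𝓝 a₀)) (hb : Tendsto b atTop (𝓝 b₀))
    (hx : Tendsto x atTop (𝓝 x₀)) (hx₀ : x₀ ∉ Icc a₀ b₀) :
    ∀ᶠ k in atTop, extendTop (f k) (Icc (a k) (b k)) (x k) = ⊤ := by
  rw [mem_Icc, not_and_or, not_le, not_le] at hx₀
  rcases hx₀ with hlt | hlt
  · filter_upwards [hx.eventually_lt ha hlt] with k hk
    exact extendTop_of_notMem _ fun h => hk.not_ge h.1
  · filter_upwards [hb.eventually_lt hx hlt] with k hk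
    exact extendTop_of_notMem _ fun h => hk.not_ge h.2

lemma le_liminf_extendTop (ha : Tendsto a atTop (𝓝 a₀)) (hb : Tendsto b atTop (𝓝 b₀))
    (hg : Continuous g) (he : Tendsto e atTop (𝓝 0))
    (hfg : ∀ k, ∀ y ∈ Icc (a k) (b k), |f k y - g y| ≤ e k) (hx : Tendsto x atTop (𝓝 x₀)) :
    extendTop g (Icc a₀ b₀) x₀ ≤
      liminf (fun k => extendTop (f k) (Icc (a k) (b k)) (x k)) atTop := by
  by_cases hx₀ : x₀ ∈ Icc a₀ b₀
  · have hlim : Tendsto (fun k => ((g (x k) - e k : ℝ) : EReal)) atTop (𝓝 (g x₀ : EReal)) := by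
      have := ((hg.tendsto x₀).comp hx).sub he
      rw [sub_zero] at this
      exact (continuous_coe_real_ereal.tendsto _).comp this
    rw [extendTop_of_mem g hx₀, ← hlim.liminf_eq]
    refine liminf_le_liminf (Eventually.of_forall fun k => ?_)
    by_cases hk : x k ∈ Icc (a k) (b k)
    · rw [extendTop_of_mem _ hk, EReal.coe_le_coe_iff]
      linarith [(abs_le.1 (hfg k _ hk)).1]
    · rw [extendTop_of_notMem _ hk]
      exact le_top
  · rw [(tendsto_const_nhds.congr' (EventuallyEq.symm
      (eventually_extendTop_eq_top ha hb hx hx₀))).liminf_eq]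
    exact le_top

lemma exists_tendsto_extendTop (hab : ∀ k, a k ≤ b k) (ha : Tendsto a atTop (𝓝 a₀))
    (hb : Tendsto b atTop (𝓝 b₀)) (hg : Continuous g) (he : Tendsto e atTop (𝓝 0))
    (hfg : ∀ k, ∀ y ∈ Icc (a k) (b k), |f k y - g y| ≤ e k) (x₀ : ℝ) :
    ∃ x : ℕ → ℝ, Tendsto x atTop (𝓝 x₀) ∧
      Tendsto (fun k => extendTop (f k) (Icc (a k) (b k)) (x k)) atTop
        (𝓝 (extendTop g (Icc a₀ b₀) x₀)) := by
  by_cases hx₀ : x₀ ∈ Icc a₀ b₀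
  · set x : ℕ → ℝ := fun k => max (a k) (min x₀ (b k))
    have hmem (k : ℕ) : x k ∈ Icc (a k) (b k) :=
      ⟨le_max_left _ _, max_le (hab k) (min_le_right _ _)⟩
    have hx : Tendsto x atTop (𝓝 x₀) := by
      have := ha.max ((tendsto_const_nhds (x := x₀)).min hb)
      rwa [min_eq_left hx₀.2, max_eq_right hx₀.1] at this
    refine ⟨x, hx, ?_⟩
    simp only [extendTop_of_mem _ (hmem _), extendTop_of_mem g hx₀]
    refine (continuous_coe_real_ereal.tendsto _).comp ?_
    have hdiff : Tendsto (fun k => f k (x k) - g (x k)) atTop (𝓝 0) :=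
      squeeze_zero_norm (fun k => hfg k _ (hmem k)) he
    simpa only [Function.comp_apply, sub_add_cancel, zero_add] using
      hdiff.add ((hg.tendsto x₀).comp hx)
  · refine ⟨fun _ => x₀, tendsto_const_nhds, ?_⟩
    rw [extendTop_of_notMem g hx₀]
    exact tendsto_const_nhds.congr' (EventuallyEq.symm
      (eventually_extendTop_eq_top ha hb tendsto_const_nhds hx₀))

lemma tauConv_extendTop (hab : ∀ k, a k ≤ b k) (ha : Tendsto a atTop (𝓝 a₀))
    (hb : Tendsto b atTop (𝓝 b₀)) (hg : Continuous g) (he : Tendsto e atTop (𝓝 0))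
    (hfg : ∀ k, ∀ y ∈ Icc (a k) (b k), |f k y - g y| ≤ e k)
    (hf : ∀ k, HasSubgradientsIn (f k) (Icc (a k) (b k)) (Icc (-K) K))
    (hLC : IsLC (extendTop g (Icc a₀ b₀))) :
    TauConv (fun k => extendTop (f k) (Icc (a k) (b k))) (extendTop g (Icc a₀ b₀)) := by
  refine ⟨fun k => (hf k).isLC_Icc (hab k), hLC,
    fun x₀ x hx => le_liminf_extendTop ha hb hg he hfg hx,
    exists_tendsto_extendTop hab ha hb hg he hfg, max K 1, by positivity,
    fun k => ((hf k).mono subset_rfl (Icc_subset_Icc ?_ ?_)).lipBound⟩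
  · exact neg_le_neg (le_max_left _ _)
  · exact le_max_left _ _

end TauConvergence

/-- The valuations of the theorem: simple, τ-upper semicontinuous, invariant under translations and
under the addition of affine functions, and zero on indicator functions of closed intervals. -/
structure AdmissibleVal (Z : (ℝ → EReal) → ℝ) : Prop where
  isVal : IsVal Z
  tauUSC : TauUSC Z
  transInv : TransInv Z
  dualTransInv : DualTransInv Z
  simple : ∀ u : ℝ → EReal, IsLC u → (∃ x : ℝ, edom u = {x}) → Z u = 0
  val_eIndicator : ∀ a b : ℝ, a ≤ b → Z (eIndicator (Icc a b)) = 0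

namespace AdmissibleVal

variable {Z : (ℝ → EReal) → ℝ} {f : ℝ → ℝ} {a b c m M : ℝ}

lemma val_singleton (hZ : AdmissibleVal Z) (f : ℝ → ℝ) (c : ℝ) : Z (extendTop f {c}) = 0 := by
  have hf : HasSubgradientsIn f {c} (Icc 0 0) := by
    rintro x rfl
    exact ⟨0, ⟨le_rfl, le_rfl⟩, by rintro y rfl; simp⟩
  exact hZ.simple _ (hf.isLC (convex_singleton c) isCompact_singleton (singleton_nonempty c))
    ⟨c, edom_extendTop _ _⟩

lemma val_extendTop_add (hZ : AdmissibleVal Z) (hf : HasSubgradientsIn f (Icc a b) (Icc m M))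
    (hc : c ∈ Icc a b) :
    Z (extendTop f (Icc a b)) = Z (extendTop f (Icc a c)) + Z (extendTop f (Icc c b)) := by
  have hunion : Icc a c ∪ Icc c b = Icc a b := Icc_union_Icc_eq_Icc hc.1 hc.2
  have hinter : Icc a c ∩ Icc c b = {c} := Icc_inter_Icc_eq_singleton hc.1 hc.2
  have key := hZ.isVal (extendTop f (Icc a c)) (extendTop f (Icc c b))
    ((hf.mono (Icc_subset_Icc_right hc.2) subset_rfl).isLC_Icc hc.1)
    ((hf.mono (Icc_subset_Icc_left hc.1) subset_rfl).isLC_Icc hc.2)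
    (by rw [min_extendTop, hunion]; exact hf.isLC_Icc (hc.1.trans hc.2))
  rwa [min_extendTop, max_extendTop, hunion, hinter, hZ.val_singleton, add_zero] at key

lemma val_affineShift (hZ : AdmissibleVal Z) (hf : HasSubgradientsIn f (Icc a b) (Icc m M))
    (hab : a ≤ b) (y k c : ℝ) :
    Z (extendTop (affineShift f y k c) (Icc (a + y) (b + y))) = Z (extendTop f (Icc a b)) := by
  have htrans : (fun x => extendTop f (Icc a b) (x - y)) =
      extendTop (affineShift f y 0 0) (Icc (a + y) (b + y)) := by
    funext x
    simp only [extendTop, affineShift, mem_Icc, le_sub_iff_add_le, sub_le_iff_le_add, zero_mul,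
      add_zero]
  have hdual := hZ.dualTransInv _ ((hf.affineShift y 0 0).isLC_Icc (by linarith))
    (k • LinearMap.id) c
  rw [extendTop_add_coe] at hdual
  rw [← hZ.transInv _ (hf.isLC_Icc hab) y, htrans, ← hdual]
  congr 2
  funext x
  simp [affineShift, add_assoc]

end AdmissibleVal

/-! ### Concatenation of convex pieces -/

/-- A convex function on `[0, length]` that vanishes at `0` and has slopes in `[0, slope]`. Only the
values of `toFun` on `[0, length]` matter; `slope` may exceed the slopes of `toFun`, and is the
slope at which a further piece gets attached by `ConvexPiece.concat`. -/
@[ext]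
structure ConvexPiece where
  length : ℝ
  slope : ℝ
  toFun : ℝ → ℝ
  length_nonneg : 0 ≤ length
  slope_nonneg : 0 ≤ slope
  continuous : Continuous toFun
  map_zero : toFun 0 = 0
  subgradients : HasSubgradientsIn toFun (Icc 0 length) (Icc 0 slope)

namespace ConvexPiece

variable {P P₁ P₂ Q Q₁ Q₂ : ConvexPiece} {L A t x ε ε₁ ε₂ : ℝ}

instance : CoeFun ConvexPiece fun _ => ℝ → ℝ := ⟨toFun⟩

/-- The element of `LC(ℝ)` given by a piece. -/
def toEReal (P : ConvexPiece) : ℝ → EReal := extendTop P (Icc 0 P.length)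

lemma isLC_toEReal (P : ConvexPiece) : IsLC P.toEReal := P.subgradients.isLC_Icc P.length_nonneg

lemma apply_nonneg (P : ConvexPiece) (hx : x ∈ Icc 0 P.length) : 0 ≤ P x := by
  have := P.subgradients.mul_sub_le (left_mem_Icc.2 P.length_nonneg) hx hx.1
  rwa [P.map_zero, zero_mul, sub_zero] at this

lemma apply_le (P : ConvexPiece) (hx : x ∈ Icc 0 P.length) : P x ≤ P.length * P.slope := by
  have := P.subgradients.sub_le_mul (left_mem_Icc.2 P.length_nonneg) hx hx.1
  rw [P.map_zero, sub_zero, sub_zero] at this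
  linarith [mul_le_mul_of_nonneg_left hx.2 P.slope_nonneg]

/-- The zero function on `[0, L]`, to be continued with slope `A`. -/
def zero (L A : ℝ) (hL : 0 ≤ L) (hA : 0 ≤ A) : ConvexPiece where
  length := L
  slope := A
  toFun := 0
  length_nonneg := hL
  slope_nonneg := hA
  continuous := continuous_zero
  map_zero := rfl
  subgradients := fun _ _ => ⟨0, ⟨le_rfl, hA⟩, fun _ _ => by simp⟩

/-- The parabola `x ↦ t * x ^ 2 / 2` on `[0, L]`, to be continued differentiably. -/
def quad (t L : ℝ) (ht : 0 ≤ t) (hL : 0 ≤ L) : ConvexPiece where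
  length := L
  slope := t * L
  toFun := fun x => t * x ^ 2 / 2
  length_nonneg := hL
  slope_nonneg := mul_nonneg ht hL
  continuous := by fun_prop
  map_zero := by simp
  subgradients := fun x hx =>
    ⟨t * x, ⟨mul_nonneg ht hx.1, mul_le_mul_of_nonneg_left hx.2 ht⟩, fun y _ => by
      linarith [mul_nonneg ht (sq_nonneg (y - x))]⟩

/-- The part of `P.concat Q` to the right of `P.length`. -/
def tail (P Q : ConvexPiece) : ℝ → ℝ :=
  affineShift Q P.length P.slope (P P.length - P.slope * P.length)

lemma tail_apply (P Q : ConvexPiece) (x : ℝ) :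
    tail P Q x = P P.length + P.slope * (x - P.length) + Q (x - P.length) := by
  simp only [tail, affineShift]
  ring

lemma tail_length (P Q : ConvexPiece) : tail P Q P.length = P P.length := by
  rw [tail_apply, sub_self, mul_zero, add_zero, Q.map_zero, add_zero]

lemma subgradients_tail (P Q : ConvexPiece) :
    HasSubgradientsIn (tail P Q) (Icc P.length (P.length + Q.length))
      (Icc P.slope (P.slope + Q.slope)) := by
  have := Q.subgradients.affineShift P.length P.slope (P P.length - P.slope * P.length)
  rwa [zero_add, zero_add, add_comm Q.length, add_comm Q.slope] at this

/-- The piece that follows `P` and then, starting from the end of `P` with slope `P.slope`,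
follows `Q`. -/
def concat (P Q : ConvexPiece) : ConvexPiece where
  length := P.length + Q.length
  slope := P.slope + Q.slope
  toFun := fun x => if x ≤ P.length then P x else tail P Q x
  length_nonneg := add_nonneg P.length_nonneg Q.length_nonneg
  slope_nonneg := add_nonneg P.slope_nonneg Q.slope_nonneg
  continuous := P.continuous.if_le (continuous_affineShift Q.continuous _ _ _) continuous_id
    continuous_const fun x hx => by rw [hx, tail_length]
  map_zero := (if_pos P.length_nonneg).trans P.map_zero
  subgradients := by
    refine (P.subgradients.congr fun x hx => (if_pos hx.2).symm).glue
      ((subgradients_tail P Q).congr fun x hx => ?_) P.length_nonneg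
      (le_add_of_nonneg_right Q.length_nonneg)
    rcases hx.1.eq_or_lt with rfl | hlt
    · rw [if_pos le_rfl, tail_length]
    · rw [if_neg hlt.not_ge]

lemma concat_length (P Q : ConvexPiece) : (P.concat Q).length = P.length + Q.length := rfl

lemma concat_slope (P Q : ConvexPiece) : (P.concat Q).slope = P.slope + Q.slope := rfl

lemma concat_apply_of_le (P Q : ConvexPiece) (hx : x ≤ P.length) : P.concat Q x = P x := if_pos hx

lemma concat_apply_of_ge (P Q : ConvexPiece) (hx : P.length ≤ x) :
    P.concat Q x = tail P Q x := by
  rcases hx.eq_or_lt with rfl | hlt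
  · rw [concat_apply_of_le P Q le_rfl, tail_length]
  · exact if_neg hlt.not_ge

lemma quad_concat_quad {L' : ℝ} (ht : 0 ≤ t) (hL : 0 ≤ L) (hL' : 0 ≤ L') :
    (quad t L ht hL).concat (quad t L' ht hL') = quad t (L + L') ht (add_nonneg hL hL') := by
  ext x
  · rfl
  · simp only [concat, quad]
    ring
  · rcases le_total x L with hx | hx
    · exact concat_apply_of_le _ _ hx
    · rw [concat_apply_of_ge _ _ hx, tail_apply]
      simp only [quad]
      ring

lemma exists_affineShift_eq {f : ℝ → ℝ} {a b m M : ℝ}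
    (hf : HasSubgradientsIn f (Icc a b) (Icc m M)) (hcont : Continuous f) (hab : a ≤ b) :
    ∃ P : ConvexPiece, P.length = b - a ∧ P.slope = M - m ∧
      affineShift P a m (f a - m * a) = f := by
  have hmM : m ≤ M := let ⟨_, hp, _⟩ := hf a (left_mem_Icc.2 hab); hp.1.trans hp.2
  refine ⟨⟨b - a, M - m, affineShift f (-a) (-m) (-f a), sub_nonneg.2 hab, sub_nonneg.2 hmM,
    continuous_affineShift hcont _ _ _, by simp [affineShift], ?_⟩, rfl, rfl, ?_⟩
  · simpa only [← sub_eq_add_neg, sub_self] using hf.affineShift (-a) (-m) (-f a)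
  · funext x
    simp only [affineShift, sub_neg_eq_add, sub_add_cancel]
    ring

lemma exists_concat_eq (P : ConvexPiece) {s : ℝ} (hs : s ∈ Icc 0 P.length) :
    ∃ P₁ P₂ : ConvexPiece, P₁.length = s ∧ P₁.concat P₂ = P := by
  obtain ⟨p, hp, h₁, h₂⟩ := P.subgradients.split hs
  obtain ⟨P₂, hlength, hslope, hshift⟩ := exists_affineShift_eq h₂ P.continuous hs.2
  let P₁ : ConvexPiece := ⟨s, p, P, hs.1, hp.1, P.continuous, P.map_zero, h₁⟩
  refine ⟨P₁, P₂, rfl, ConvexPiece.ext ?_ ?_ (funext fun x => ?_)⟩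
  · simp only [concat_length, hlength, P₁, add_sub_cancel]
  · simp only [concat_slope, hslope, P₁, add_sub_cancel]
  · rcases le_total x s with hx | hx
    · exact concat_apply_of_le P₁ P₂ hx
    · rw [concat_apply_of_ge P₁ P₂ hx]
      exact congr_fun hshift x

lemma induction_on_small {η : ℝ} (hη : 0 < η) {motive : ConvexPiece → Prop}
    (base : ∀ P : ConvexPiece, P.length = 0 → motive P)
    (step : ∀ P Q : ConvexPiece, P.length ≤ η → motive Q → motive (P.concat Q))
    (P : ConvexPiece) : motive P := by
  suffices h : ∀ (n : ℕ) (P : ConvexPiece), P.length ≤ n * η → motive P by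
    obtain ⟨n, hn⟩ := exists_nat_ge (P.length / η)
    exact h n P ((div_le_iff₀ hη).1 hn)
  intro n
  induction n with
  | zero =>
    intro P hP
    rw [Nat.cast_zero, zero_mul] at hP
    exact base P (hP.antisymm P.length_nonneg)
  | succ n ih =>
    intro P hP
    obtain ⟨P₁, P₂, hlength, rfl⟩ := P.exists_concat_eq
      (s := min η P.length) ⟨le_min hη.le P.length_nonneg, min_le_right _ _⟩
    refine step P₁ P₂ (hlength ▸ min_le_left _ _) (ih P₂ ?_)
    rcases min_choice η (P₁.concat P₂).length with hmin | hmin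
    · rw [hmin] at hlength
      simp only [concat_length, hlength, Nat.cast_succ] at hP
      linarith
    · rw [hmin] at hlength
      have hzero : P₂.length = 0 := by simpa [concat_length] using hlength
      rw [hzero]
      positivity

/-- `Q` and `P` have the same length and slope, and are `ε`-close on `[0, length]`. -/
structure Close (Q P : ConvexPiece) (ε : ℝ) : Prop where
  length_eq : Q.length = P.length
  slope_eq : Q.slope = P.slope
  abs_sub_le : ∀ x ∈ Icc 0 P.length, |Q x - P x| ≤ ε

namespace Close

lemma refl (P : ConvexPiece) : Close P P 0 := ⟨rfl, rfl, fun x _ => by simp⟩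

lemma mono (h : Close Q P ε₁) (hε : ε₁ ≤ ε₂) : Close Q P ε₂ :=
  ⟨h.length_eq, h.slope_eq, fun x hx => (h.abs_sub_le x hx).trans hε⟩

lemma of_eq (hlength : Q.length = P.length) (hslope : Q.slope = P.slope) :
    Close Q P (P.length * P.slope) := by
  refine ⟨hlength, hslope, fun x hx => ?_⟩
  have hxQ : x ∈ Icc 0 Q.length := hlength ▸ hx
  have hQ : Q x ≤ P.length * P.slope := hlength ▸ hslope ▸ Q.apply_le hxQ
  exact abs_sub_le_of_nonneg_of_le (Q.apply_nonneg hxQ) hQ (P.apply_nonneg hx) (P.apply_le hx)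

lemma zero_left (P : ConvexPiece) :
    Close (zero P.length P.slope P.length_nonneg P.slope_nonneg) P (P.length * P.slope) :=
  Close.of_eq rfl rfl

lemma concat (h₁ : Close Q₁ P₁ ε₁) (h₂ : Close Q₂ P₂ ε₂) :
    Close (Q₁.concat Q₂) (P₁.concat P₂) (ε₁ + ε₂) := by
  refine ⟨congr_arg₂ _ h₁.length_eq h₂.length_eq, congr_arg₂ _ h₁.slope_eq h₂.slope_eq,
    fun x hx => ?_⟩
  rcases le_total x P₁.length with hxP | hxP
  · rw [concat_apply_of_le _ _ hxP, concat_apply_of_le _ _ (hxP.trans_eq h₁.length_eq.symm)]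
    have : 0 ≤ ε₂ := (abs_nonneg _).trans (h₂.abs_sub_le 0 (left_mem_Icc.2 P₂.length_nonneg))
    linarith [h₁.abs_sub_le x ⟨hx.1, hxP⟩]
  · rw [concat_apply_of_ge _ _ hxP, concat_apply_of_ge _ _ (h₁.length_eq.trans_le hxP), tail_apply,
      tail_apply, h₁.length_eq, h₁.slope_eq, add_sub_add_comm, add_sub_add_right_eq_sub]
    exact (abs_add_le _ _).trans (add_le_add
      (h₁.abs_sub_le _ (right_mem_Icc.2 P₁.length_nonneg))
      (h₂.abs_sub_le _ ⟨sub_nonneg.2 hxP, sub_le_iff_le_add'.2 hx.2⟩))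

end Close

/-- Uniform convergence of pieces on domains that may vary, with bounded slopes. -/
structure ConvergesTo (R : ℕ → ConvexPiece) (G : ConvexPiece) : Prop where
  length : Tendsto (fun k => (R k).length) atTop (𝓝 G.length)
  slope_le : ∃ V, ∀ k, (R k).slope ≤ V
  uniform : ∃ e : ℕ → ℝ, Tendsto e atTop (𝓝 0) ∧ ∀ k, ∀ x ∈ Icc 0 (R k).length, |R k x - G x| ≤ e k

namespace ConvergesTo

variable {R S : ℕ → ConvexPiece} {G : ConvexPiece} {e : ℕ → ℝ}

lemma const (P : ConvexPiece) : ConvergesTo (fun _ => P) P :=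
  ⟨tendsto_const_nhds, ⟨P.slope, fun _ => le_rfl⟩, ⟨0, tendsto_const_nhds, fun _ _ _ => by simp⟩⟩

lemma comp (h : ConvergesTo R G) {φ : ℕ → ℕ} (hφ : Tendsto φ atTop atTop) :
    ConvergesTo (R ∘ φ) G := by
  obtain ⟨V, hV⟩ := h.slope_le
  obtain ⟨e, he, hRG⟩ := h.uniform
  exact ⟨h.length.comp hφ, ⟨V, fun k => hV (φ k)⟩, e ∘ φ, he.comp hφ, fun k => hRG (φ k)⟩

lemma of_close (h : ConvergesTo S G) (hclose : ∀ k, Close (R k) (S k) (e k))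
    (he : Tendsto e atTop (𝓝 0)) : ConvergesTo R G := by
  obtain ⟨V, hV⟩ := h.slope_le
  obtain ⟨e', he', hSG⟩ := h.uniform
  refine ⟨?_, ⟨V, fun k => (hclose k).slope_eq ▸ hV k⟩, fun k => e k + e' k, ?_, fun k x hx => ?_⟩
  · simpa only [(hclose _).length_eq] using h.length
  · simpa only [add_zero] using he.add he'
  · rw [(hclose k).length_eq] at hx
    exact (abs_sub_le _ (S k x) _).trans
      (add_le_add ((hclose k).abs_sub_le x hx) (hSG k x hx))

lemma tauConv (h : ConvergesTo R G) : TauConv (fun k => (R k).toEReal) G.toEReal := by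
  obtain ⟨V, hV⟩ := h.slope_le
  obtain ⟨e, he, hRG⟩ := h.uniform
  exact tauConv_extendTop (K := V) (fun k => (R k).length_nonneg) tendsto_const_nhds h.length
    G.continuous he hRG (fun k => (R k).subgradients.mono subset_rfl (Icc_subset_Icc
      (neg_nonpos.2 ((R k).slope_nonneg.trans (hV k))) (hV k))) G.isLC_toEReal

end ConvergesTo

lemma extendTop_concat_left (P Q : ConvexPiece) :
    extendTop (P.concat Q) (Icc 0 P.length) = P.toEReal :=
  extendTop_congr fun _ hx => concat_apply_of_le P Q hx.2

lemma extendTop_concat_right (P Q : ConvexPiece) :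
    extendTop (P.concat Q) (Icc P.length (P.concat Q).length) =
      extendTop (tail P Q) (Icc (0 + P.length) (Q.length + P.length)) := by
  rw [zero_add, add_comm Q.length]
  exact extendTop_congr fun _ hx => concat_apply_of_ge P Q hx.1

/-- The `m`-fold concatenation of a piece with itself. -/
def rep (P : ConvexPiece) : ℕ → ConvexPiece
  | 0 => zero 0 0 le_rfl le_rfl
  | m + 1 => (P.rep m).concat P

lemma Close.rep_quad (ht : 0 ≤ t) (hL : 0 ≤ L) (h : Close P (quad t L ht hL) ε) (m : ℕ) :
    Close (P.rep m) (quad t (m * L) ht (by positivity)) (m * ε) := by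
  induction m with
  | zero =>
    refine (Close.of_eq ?_ ?_).mono ?_ <;> simp [rep, zero, quad]
  | succ m ih =>
    have := ih.concat h
    rw [quad_concat_quad] at this
    simpa only [rep, Nat.cast_succ, add_one_mul] using this

end ConvexPiece

/-! ### Values of a valuation on convex pieces -/

lemma eq_mul_of_add_of_nonneg {φ : ℝ → ℝ} (hadd : ∀ x y, 0 ≤ x → 0 ≤ y → φ (x + y) = φ x + φ y)
    (hnonneg : ∀ x, 0 ≤ x → 0 ≤ φ x) {x : ℝ} (hx : 0 ≤ x) : φ x = x * φ 1 := by
  have hzero : φ 0 = 0 := by simpa using hadd 0 0 le_rfl le_rfl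
  have hmono {y z : ℝ} (hy : 0 ≤ y) (hyz : y ≤ z) : φ y ≤ φ z := by
    have := hadd y (z - y) hy (sub_nonneg.2 hyz)
    rw [add_sub_cancel] at this
    linarith [hnonneg _ (sub_nonneg.2 hyz)]
  have hnat (n : ℕ) {y : ℝ} (hy : 0 ≤ y) : φ (n * y) = n * φ y := by
    induction n with
    | zero => simp [hzero]
    | succ n ih => rw [Nat.cast_succ, add_one_mul, add_one_mul, hadd _ _ (by positivity) hy, ih]
  have hfloor (n : ℕ) : ⌊x * n⌋₊ * φ 1 ≤ n * φ x ∧ n * φ x ≤ (⌊x * n⌋₊ + 1) * φ 1 := by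
    have hxn : 0 ≤ x * n := by positivity
    have hsucc : φ (⌊x * n⌋₊ + 1) = (⌊x * n⌋₊ + 1) * φ 1 := by
      simpa using hnat (⌊x * n⌋₊ + 1) zero_le_one
    rw [← hnat n hx, ← hsucc, ← hnat _ zero_le_one, mul_one, mul_comm (n : ℝ)]
    exact ⟨hmono (by positivity) (Nat.floor_le hxn), hmono hxn (Nat.lt_floor_add_one _).le⟩
  have hlim : Tendsto (fun n : ℕ => (⌊x * n⌋₊ : ℝ) / n * φ 1) atTop (𝓝 (x * φ 1)) :=
    ((tendsto_nat_floor_mul_div_atTop hx).comp tendsto_natCast_atTop_atTop).mul_const _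
  have hlim' : Tendsto (fun n : ℕ => (⌊x * n⌋₊ : ℝ) / n * φ 1 + φ 1 / n) atTop (𝓝 (x * φ 1)) := by
    simpa only [add_zero] using hlim.add (tendsto_const_div_atTop_nhds_zero_nat (φ 1))
  refine tendsto_nhds_unique (tendsto_of_tendsto_of_tendsto_of_le_of_le' hlim hlim' ?_ ?_)
    tendsto_const_nhds |>.symm
  all_goals
    filter_upwards [eventually_gt_atTop 0] with n hn
    have hn' : (0 : ℝ) < n := Nat.cast_pos.2 hn
  · rw [div_mul_eq_mul_div, div_le_iff₀ hn', mul_comm (φ x)]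
    exact (hfloor n).1
  · rw [div_mul_eq_mul_div, ← add_div, le_div_iff₀ hn', mul_comm (φ x), ← add_one_mul]
    exact (hfloor n).2

namespace AdmissibleVal

open ConvexPiece

variable {Z : (ℝ → EReal) → ℝ} {f : ℝ → ℝ} {P : ConvexPiece} {a b c d m M s t ε : ℝ}

lemma val_concat (hZ : AdmissibleVal Z) (P Q : ConvexPiece) :
    Z (P.concat Q).toEReal = Z P.toEReal + Z Q.toEReal := by
  rw [toEReal, hZ.val_extendTop_add (P.concat Q).subgradients
    ⟨P.length_nonneg, le_add_of_nonneg_right Q.length_nonneg⟩, extendTop_concat_left,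
    extendTop_concat_right, tail, hZ.val_affineShift Q.subgradients Q.length_nonneg, ← toEReal]

lemma val_zero (hZ : AdmissibleVal Z) {L A : ℝ} (hL : 0 ≤ L) (hA : 0 ≤ A) :
    Z (zero L A hL hA).toEReal = 0 := by
  rw [← hZ.val_eIndicator 0 L hL, eIndicator_eq_extendTop]
  rfl

lemma val_eq_zero_of_length_eq_zero (hZ : AdmissibleVal Z) (hP : P.length = 0) :
    Z P.toEReal = 0 := by
  rw [toEReal, hP, Icc_self, hZ.val_singleton]

lemma exists_close_val_eq_zero (hZ : AdmissibleVal Z) (P : ConvexPiece) (hε : 0 < ε) :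
    ∃ Q, Close Q P ε ∧ Z Q.toEReal = 0 := by
  have hslope : 0 < P.slope + 1 := by linarith [P.slope_nonneg]
  set η := ε / (P.slope + 1) with hη
  have hηpos : 0 < η := div_pos hε hslope
  suffices h : ∃ Q, Close Q P (η * P.slope) ∧ Z Q.toEReal = 0 by
    obtain ⟨Q, hQ, hQZ⟩ := h
    refine ⟨Q, hQ.mono ?_, hQZ⟩
    rw [hη, div_mul_eq_mul_div, div_le_iff₀ hslope]
    linarith
  clear_value η
  clear hη hslope
  induction P using induction_on_small hηpos with
  | base P hP =>
    refine ⟨zero P.length P.slope P.length_nonneg P.slope_nonneg,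
      (Close.zero_left P).mono ?_, hZ.val_zero _ _⟩
    exact mul_le_mul_of_nonneg_right (hP.trans_le hηpos.le) P.slope_nonneg
  | step P P' hP ih =>
    obtain ⟨Q', hQ', hQZ'⟩ := ih
    refine ⟨(zero P.length P.slope P.length_nonneg P.slope_nonneg).concat Q',
      ((Close.zero_left P).concat hQ').mono ?_, ?_⟩
    · simp only [concat_slope, mul_add]
      gcongr
      exact P.slope_nonneg
    · rw [hZ.val_concat, hZ.val_zero, hQZ', add_zero]

lemma val_toEReal_nonneg (hZ : AdmissibleVal Z) (P : ConvexPiece) : 0 ≤ Z P.toEReal := by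
  choose Q hQ hQZ using fun k : ℕ =>
    hZ.exists_close_val_eq_zero P (Nat.one_div_pos_of_nat (α := ℝ) (n := k))
  have hQP := (ConvergesTo.const P).of_close hQ tendsto_one_div_add_atTop_nhds_zero_nat
  simpa only [hQZ, limsup_const] using hZ.tauUSC _ _ hQP.tauConv

lemma val_extendTop_nonneg (hZ : AdmissibleVal Z) (hf : HasSubgradientsIn f (Icc a b) (Icc m M))
    (hcont : Continuous f) (hab : a ≤ b) : 0 ≤ Z (extendTop f (Icc a b)) := by
  obtain ⟨P, hlength, -, hPf⟩ := exists_affineShift_eq hf hcont hab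
  have := hZ.val_affineShift P.subgradients P.length_nonneg a m (f a - m * a)
  rw [hPf, hlength, zero_add, sub_add_cancel, ← hlength] at this
  exact this ▸ hZ.val_toEReal_nonneg P

lemma val_extendTop_mono (hZ : AdmissibleVal Z) (hf : HasSubgradientsIn f (Icc a b) (Icc m M))
    (hcont : Continuous f) (hac : a ≤ c) (hcd : c ≤ d) (hdb : d ≤ b) :
    Z (extendTop f (Icc c d)) ≤ Z (extendTop f (Icc a b)) := by
  have hcb := hf.mono (Icc_subset_Icc_left hac) subset_rfl
  rw [hZ.val_extendTop_add hf ⟨hac, hcd.trans hdb⟩, hZ.val_extendTop_add hcb ⟨hcd, hdb⟩]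
  linarith [hZ.val_extendTop_nonneg (hf.mono (Icc_subset_Icc_right (hcd.trans hdb)) subset_rfl)
    hcont hac, hZ.val_extendTop_nonneg (hcb.mono (Icc_subset_Icc_left hcd) subset_rfl) hcont hdb]

lemma abs_val_sub_val (hZ : AdmissibleVal Z) (hf : HasSubgradientsIn f (Icc a b) (Icc m M))
    (hcont : Continuous f) (hs : s ∈ Icc a b) (ht : t ∈ Icc a b) :
    |Z (extendTop f (Icc a s)) - Z (extendTop f (Icc a t))| = Z (extendTop f (uIcc s t)) := by
  wlog hst : s ≤ t generalizing s t
  · rw [abs_sub_comm, uIcc_comm]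
    exact this ht hs (le_of_not_ge hst)
  have hat := hf.mono (Icc_subset_Icc_right ht.2) subset_rfl
  rw [uIcc_of_le hst, hZ.val_extendTop_add hat ⟨hs.1, hst⟩, sub_add_cancel_left, abs_neg,
    abs_of_nonneg]
  exact hZ.val_extendTop_nonneg (hat.mono (Icc_subset_Icc_left hs.1) subset_rfl) hcont hst

lemma tendsto_val_uIcc (hZ : AdmissibleVal Z) (hf : HasSubgradientsIn f (Icc a b) (Icc (-M) M))
    (hcont : Continuous f) {x : ℕ → ℝ} (hx : ∀ k, x k ∈ Icc a b) (ht : t ∈ Icc a b)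
    (hlim : Tendsto x atTop (𝓝 t)) :
    Tendsto (fun k => Z (extendTop f (uIcc (x k) t))) atTop (𝓝 0) := by
  have hsub (k : ℕ) : uIcc (x k) t ⊆ Icc a b := uIcc_subset_Icc (hx k) ht
  have hfk (k : ℕ) := hf.mono (hsub k) subset_rfl
  have hinf : Tendsto (fun k => x k ⊓ t) atTop (𝓝 t) := by
    simpa only [inf_idem] using hlim.min (tendsto_const_nhds (x := t))
  have hsup : Tendsto (fun k => x k ⊔ t) atTop (𝓝 t) := by
    simpa only [sup_idem] using hlim.max (tendsto_const_nhds (x := t))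
  have hLC := (hf.mono (Icc_subset_Icc ht.1 ht.2) subset_rfl).isLC_Icc le_rfl
  have husc := hZ.tauUSC _ _ (tauConv_extendTop (fun k => inf_le_sup) hinf hsup hcont
    (tendsto_const_nhds (x := (0 : ℝ))) (fun k y _ => by simp) hfk hLC)
  rw [Icc_self, hZ.val_singleton] at husc
  have hnonneg (k : ℕ) : 0 ≤ Z (extendTop f (uIcc (x k) t)) :=
    hZ.val_extendTop_nonneg (hfk k) hcont inf_le_sup
  have hle (k : ℕ) : Z (extendTop f (uIcc (x k) t)) ≤ Z (extendTop f (Icc a b)) :=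
    hZ.val_extendTop_mono hf hcont (le_inf (hx k).1 ht.1) inf_le_sup (sup_le (hx k).2 ht.2)
  have hbdd : IsBoundedUnder (· ≤ ·) atTop fun k => Z (extendTop f (uIcc (x k) t)) :=
    isBoundedUnder_of ⟨_, hle⟩
  exact tendsto_of_le_liminf_of_limsup_le
    (le_liminf_of_le hbdd.isCoboundedUnder_ge (Eventually.of_forall hnonneg)) husc hbdd
    (isBoundedUnder_of ⟨0, hnonneg⟩)

lemma continuousOn_val (hZ : AdmissibleVal Z) (hf : HasSubgradientsIn f (Icc a b) (Icc (-M) M))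
    (hcont : Continuous f) : ContinuousOn (fun s => Z (extendTop f (Icc a s))) (Icc a b) := by
  rw [continuousOn_iff_continuous_domRestrict, continuous_iff_continuousAt]
  refine fun t => tendsto_of_seq_tendsto fun x hx => tendsto_iff_dist_tendsto_zero.2 ?_
  simpa only [Real.dist_eq, Function.comp_apply, domRestrict_apply,
    hZ.abs_val_sub_val hf hcont (x _).2 t.2] using
    hZ.tendsto_val_uIcc hf hcont (fun k => (x k).2) t.2 ((continuous_subtype_val.tendsto t).comp hx)

-- Follow `P` up to a suitable point, where the intermediate value theorem applies.
lemma exists_close_val_eq (hZ : AdmissibleVal Z) (hc : 0 ≤ c) (hcP : c ≤ Z P.toEReal)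
    (hε : 0 < ε) : ∃ Q, Close Q P ε ∧ Z Q.toEReal = c := by
  have hsub := P.subgradients.mono subset_rfl
    (Icc_subset_Icc_left (neg_nonpos.2 P.slope_nonneg))
  obtain ⟨s, hs, rfl⟩ : c ∈ (fun s => Z (extendTop P (Icc 0 s))) '' Icc 0 P.length := by
    refine intermediate_value_Icc P.length_nonneg (hZ.continuousOn_val hsub P.continuous) ⟨?_, hcP⟩
    simpa only [Icc_self, hZ.val_singleton] using hc
  obtain ⟨P₁, P₂, rfl, rfl⟩ := P.exists_concat_eq hs
  obtain ⟨Q₂, hQ₂, hQZ₂⟩ := hZ.exists_close_val_eq_zero P₂ hε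
  refine ⟨P₁.concat Q₂, zero_add ε ▸ (Close.refl P₁).concat hQ₂, ?_⟩
  rw [hZ.val_concat, hQZ₂, add_zero]
  exact congr_arg Z (extendTop_concat_left P₁ P₂).symm

-- Truncation makes the values constant, so that the limit superior in `TauUSC` is not the junk
-- value of an unbounded sequence.
lemma eventually_val_lt (hZ : AdmissibleVal Z) {R : ℕ → ConvexPiece} {G : ConvexPiece}
    (hR : ConvergesTo R G) (hc : Z G.toEReal < c) : ∀ᶠ k in atTop, Z (R k).toEReal < c := by
  by_contra hcon
  rw [not_eventually] at hcon
  obtain ⟨φ, hφ, hφc⟩ := extraction_of_frequently_atTop hcon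
  choose Q hQ hQZ using fun k : ℕ => hZ.exists_close_val_eq ((hZ.val_toEReal_nonneg G).trans hc.le)
    (not_lt.1 (hφc k)) (Nat.one_div_pos_of_nat (α := ℝ) (n := k))
  have hQG := (hR.comp hφ.tendsto_atTop).of_close hQ tendsto_one_div_add_atTop_nhds_zero_nat
  have := hZ.tauUSC _ _ hQG.tauConv
  simp only [hQZ, limsup_const] at this
  exact hc.not_ge this

lemma exists_pos_forall_val_le (hZ : AdmissibleVal Z) (V : ℝ) (hε : 0 < ε) :
    ∃ δ > 0, ∀ P : ConvexPiece, P.length < δ → P.slope ≤ V → Z P.toEReal ≤ ε := by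
  by_contra! hcon
  choose P hlength hslope hP using fun k : ℕ => hcon _ (Nat.one_div_pos_of_nat (α := ℝ) (n := k))
  have hlim : Tendsto (fun k => (P k).length) atTop (𝓝 0) :=
    squeeze_zero (fun k => (P k).length_nonneg) (fun k => (hlength k).le)
      tendsto_one_div_add_atTop_nhds_zero_nat
  have hconv : ConvergesTo P (zero 0 0 le_rfl le_rfl) := by
    refine ⟨hlim, ⟨V, hslope⟩, fun k => (P k).length * V, ?_, fun k x hx => ?_⟩
    · simpa only [zero_mul] using hlim.mul_const V
    · simp only [zero, Pi.zero_apply, sub_zero, abs_of_nonneg ((P k).apply_nonneg hx)]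
      exact ((P k).apply_le hx).trans (mul_le_mul_of_nonneg_left (hslope k) (P k).length_nonneg)
  obtain ⟨k, hk⟩ := (hZ.eventually_val_lt hconv (by rwa [hZ.val_zero])).exists
  exact (hP k).not_gt hk

lemma val_quad (hZ : AdmissibleVal Z) {L : ℝ} (ht : 0 ≤ t) (hL : 0 ≤ L) :
    Z (quad t L ht hL).toEReal = L * Z (quad t 1 ht zero_le_one).toEReal := by
  refine eq_mul_of_add_of_nonneg (φ := fun L => Z (extendTop (fun x => t * x ^ 2 / 2) (Icc 0 L)))
    (fun L L' hL hL' => ?_) (fun L hL => hZ.val_toEReal_nonneg (quad t L ht hL)) hL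
  have := hZ.val_concat (quad t L ht hL) (quad t L' ht hL')
  rwa [quad_concat_quad] at this

lemma val_rep (hZ : AdmissibleVal Z) (P : ConvexPiece) (m : ℕ) :
    Z (P.rep m).toEReal = m * Z P.toEReal := by
  induction m with
  | zero => simp [rep, hZ.val_zero]
  | succ m ih => rw [rep, hZ.val_concat, ih, Nat.cast_succ, add_one_mul]

end AdmissibleVal

/-! ### Piecewise linear-quadratic functions -/

section PiecewiseQuadratic

variable {f : ℝ → ℝ} {s t : Set ℝ} {a b m M : ℝ}

lemma isPLQ_extendTop_of_finite {ι : Type*} [Finite ι] [Nonempty ι] {a b : ι → ℝ}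
    (hLC : IsLC (extendTop f s)) (hab : ∀ i, a i ≤ b i) (hs : s = ⋃ i, Icc (a i) (b i))
    (hf : ∀ i, ∃ p q r : ℝ, ∀ x ∈ Icc (a i) (b i), f x = p * x ^ 2 + q * x + r) :
    IsPLQ (extendTop f s) := by
  obtain ⟨_ | l, ⟨e⟩⟩ := Finite.exists_equiv_fin ι
  · exact (e (Classical.arbitrary ι)).elim0
  refine ⟨hLC, l, a ∘ e.symm, b ∘ e.symm, fun i => hab _, ?_, fun i => ?_⟩
  · rw [edom_extendTop, hs, ← e.symm.surjective.iUnion_comp]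
    rfl
  · obtain ⟨p, q, r, h⟩ := hf (e.symm i)
    refine ⟨p, q, r, fun x hx => ?_⟩
    rw [extendTop_of_mem f (hs ▸ mem_iUnion_of_mem (e.symm i) hx), EReal.toReal_coe, h x hx]

lemma exists_of_isPLQ_extendTop (h : IsPLQ (extendTop f s)) :
    ∃ (l : ℕ) (a b : Fin (l + 1) → ℝ), (∀ i, a i ≤ b i) ∧ s = ⋃ i, Icc (a i) (b i) ∧
      ∀ i, ∃ p q r : ℝ, ∀ x ∈ Icc (a i) (b i), f x = p * x ^ 2 + q * x + r := by
  obtain ⟨-, l, a, b, hab, hs, hf⟩ := h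
  rw [edom_extendTop] at hs
  refine ⟨l, a, b, hab, hs, fun i => ?_⟩
  obtain ⟨p, q, r, hi⟩ := hf i
  refine ⟨p, q, r, fun x hx => ?_⟩
  rw [← hi x hx, extendTop_of_mem f (hs ▸ mem_iUnion_of_mem i hx), EReal.toReal_coe]

lemma isPLQ_extendTop_Icc {p q r : ℝ} (hab : a ≤ b) (hLC : IsLC (extendTop f (Icc a b)))
    (hf : ∀ x ∈ Icc a b, f x = p * x ^ 2 + q * x + r) : IsPLQ (extendTop f (Icc a b)) :=
  isPLQ_extendTop_of_finite hLC (fun _ : Unit => hab) (iUnion_const _).symm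
    fun _ => ⟨p, q, r, hf⟩

lemma isPLQ_extendTop_union (hs : IsPLQ (extendTop f s)) (ht : IsPLQ (extendTop f t))
    (hLC : IsLC (extendTop f (s ∪ t))) : IsPLQ (extendTop f (s ∪ t)) := by
  obtain ⟨k, a, b, hab, rfl, hf⟩ := exists_of_isPLQ_extendTop hs
  obtain ⟨l, a', b', hab', rfl, hf'⟩ := exists_of_isPLQ_extendTop ht
  refine isPLQ_extendTop_of_finite (a := Sum.elim a a') (b := Sum.elim b b') hLC ?_
    (by rw [iUnion_sum]; rfl) ?_
  · rintro (i | i)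
    exacts [hab i, hab' i]
  · rintro (i | i)
    exacts [hf i, hf' i]

lemma isPLQ_extendTop_affineShift (h : IsPLQ (extendTop f (Icc a b)))
    (hf : HasSubgradientsIn f (Icc a b) (Icc m M)) (hab : a ≤ b) (y k c : ℝ) :
    IsPLQ (extendTop (affineShift f y k c) (Icc (a + y) (b + y))) := by
  obtain ⟨l, a', b', hab', hunion, hquad⟩ := exists_of_isPLQ_extendTop h
  refine isPLQ_extendTop_of_finite (a := fun i => a' i + y) (b := fun i => b' i + y)
    ((hf.affineShift y k c).isLC_Icc (by linarith)) (fun i => by linarith [hab' i]) ?_ fun i => ?_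
  · simp only [← preimage_sub_const_Icc, hunion, preimage_iUnion]
  · obtain ⟨p, q, r, hi⟩ := hquad i
    refine ⟨p, q - 2 * p * y + k, r + p * y ^ 2 - q * y + c, fun x hx => ?_⟩
    rw [← preimage_sub_const_Icc] at hx
    rw [affineShift, hi (x - y) hx]
    ring

end PiecewiseQuadratic

namespace ConvexPiece

variable {P Q : ConvexPiece} {t L A : ℝ}

lemma isPLQ_zero (hL : 0 ≤ L) (hA : 0 ≤ A) : IsPLQ (zero L A hL hA).toEReal :=
  isPLQ_extendTop_Icc hL (zero L A hL hA).isLC_toEReal (p := 0) (q := 0) (r := 0)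
    fun x _ => by simp [zero]

lemma isPLQ_quad (ht : 0 ≤ t) (hL : 0 ≤ L) : IsPLQ (quad t L ht hL).toEReal :=
  isPLQ_extendTop_Icc hL (quad t L ht hL).isLC_toEReal (p := t / 2) (q := 0) (r := 0)
    fun x _ => by simp only [quad]; ring

lemma isPLQ_concat (hP : IsPLQ P.toEReal) (hQ : IsPLQ Q.toEReal) :
    IsPLQ (P.concat Q).toEReal := by
  have hunion : Icc 0 (P.concat Q).length = Icc 0 P.length ∪ Icc P.length (P.concat Q).length :=
    (Icc_union_Icc_eq_Icc P.length_nonneg (le_add_of_nonneg_right Q.length_nonneg)).symm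
  have hLC := (P.concat Q).isLC_toEReal
  rw [toEReal, hunion] at hLC ⊢
  refine isPLQ_extendTop_union ?_ ?_ hLC
  · rwa [extendTop_concat_left]
  · rw [extendTop_concat_right]
    exact isPLQ_extendTop_affineShift hQ Q.subgradients Q.length_nonneg _ _ _

end ConvexPiece

/-! ### Approximation of convex pieces -/

namespace ConvexPiece

variable {p : ℕ → ConvexPiece} {τ L : ℕ → ℝ} {t l : ℝ}

lemma convergesTo_quad (hτ : ∀ k, 0 ≤ τ k) (hL : ∀ k, 0 ≤ L k) (ht : 0 ≤ t) (hl : 0 ≤ l)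
    (hτt : Tendsto τ atTop (𝓝 t)) (hLl : Tendsto L atTop (𝓝 l)) :
    ConvergesTo (fun k => quad (τ k) (L k) (hτ k) (hL k)) (quad t l ht hl) := by
  obtain ⟨V, hV⟩ := (hτt.mul hLl).bddAbove_range
  refine ⟨hLl, ⟨V, fun k => hV (mem_range_self k)⟩, fun k => |τ k - t| * L k ^ 2 / 2, ?_,
    fun k x hx => ?_⟩
  · simpa using ((hτt.sub_const t).abs.mul (hLl.pow 2)).div_const 2
  · have hxL : x ^ 2 ≤ L k ^ 2 := pow_le_pow_left₀ hx.1 hx.2 2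
    calc |τ k * x ^ 2 / 2 - t * x ^ 2 / 2| = |τ k - t| * x ^ 2 / 2 := by
          rw [← sub_div, ← sub_mul, abs_div, abs_mul, abs_sq, abs_two]
      _ ≤ |τ k - t| * L k ^ 2 / 2 := by gcongr

lemma tendsto_floor_inv_mul (hpos : ∀ k, 0 < L k) (hlim : Tendsto L atTop (𝓝 0)) :
    Tendsto (fun k => (⌊(L k)⁻¹⌋₊ : ℝ) * L k) atTop (𝓝 1) := by
  have hinv : Tendsto (fun k => (L k)⁻¹) atTop atTop :=
    (tendsto_nhdsWithin_iff.2 ⟨hlim, Eventually.of_forall hpos⟩).inv_tendsto_nhdsGT_zero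
  simpa only [Function.comp_def, div_inv_eq_mul] using tendsto_nat_floor_div_atTop.comp hinv

lemma convergesTo_rep_quad (hpos : ∀ k, 0 < (p k).length)
    (hlength : Tendsto (fun k => (p k).length) atTop (𝓝 0)) (ht : 0 ≤ t)
    (hslope : Tendsto (fun k => (p k).slope / (p k).length) atTop (𝓝 t)) :
    ConvergesTo (fun k => (p k).rep ⌊(p k).length⁻¹⌋₊) (quad t 1 ht zero_le_one) := by
  have hτ (k : ℕ) : 0 ≤ (p k).slope / (p k).length :=
    div_nonneg (p k).slope_nonneg (p k).length_nonneg
  have hfloor := tendsto_floor_inv_mul hpos hlength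
  refine (convergesTo_quad hτ (fun k => by have := hpos k; positivity) ht zero_le_one hslope
    hfloor).of_close (fun k => (Close.of_eq (Q := p k) (P := quad _ _ (hτ k) (hpos k).le) rfl
      (div_mul_cancel₀ _ (hpos k).ne').symm).rep_quad (hτ k) (hpos k).le _) ?_
  simpa [quad, mul_assoc] using hfloor.mul (hslope.mul hlength)

end ConvexPiece

namespace AdmissibleVal

open ConvexPiece

variable {Z : (ℝ → EReal) → ℝ} {p : ℕ → ConvexPiece} {c t ε : ℝ}

-- Many copies of `p k` in a row resemble the parabola on `[0, 1]`.
lemma eventually_val_lt_mul_length (hZ : AdmissibleVal Z) (hpos : ∀ k, 0 < (p k).length)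
    (hlength : Tendsto (fun k => (p k).length) atTop (𝓝 0)) (ht : 0 ≤ t)
    (hslope : Tendsto (fun k => (p k).slope / (p k).length) atTop (𝓝 t))
    (hc : Z (quad t 1 ht zero_le_one).toEReal < c) :
    ∀ᶠ k in atTop, Z (p k).toEReal < c * (p k).length := by
  obtain ⟨c', hc', hc'c⟩ := exists_between hc
  have hfloor := (tendsto_floor_inv_mul hpos hlength).const_mul c
  rw [mul_one] at hfloor
  filter_upwards [hZ.eventually_val_lt (convergesTo_rep_quad hpos hlength ht hslope) hc',
    hfloor.eventually (lt_mem_nhds hc'c)] with k hk hck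
  rw [hZ.val_rep] at hk
  refine lt_of_mul_lt_mul_left (hk.trans (hck.trans_eq ?_)) (Nat.cast_nonneg ⌊(p k).length⁻¹⌋₊)
  ring

lemma exists_isPLQ_val_eq (hZ : AdmissibleVal Z) (P : ConvexPiece) (ht : 0 ≤ t)
    (hc : c ∈ Icc 0 1) (htc : t * (c * P.length) ≤ P.slope) :
    ∃ Q : ConvexPiece, Q.length = P.length ∧ Q.slope = P.slope ∧ IsPLQ Q.toEReal ∧
      Z Q.toEReal = c * P.length * Z (quad t 1 ht zero_le_one).toEReal := by
  have hcP : 0 ≤ c * P.length := mul_nonneg hc.1 P.length_nonneg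
  have hlength : 0 ≤ P.length - c * P.length :=
    sub_nonneg.2 (mul_le_of_le_one_left P.length_nonneg hc.2)
  refine ⟨(quad t _ ht hcP).concat (zero _ _ hlength (sub_nonneg.2 htc)),
    add_sub_cancel (c * P.length) P.length, add_sub_cancel (t * (c * P.length)) P.slope,
    isPLQ_concat (isPLQ_quad _ _) (isPLQ_zero _ _), ?_⟩
  rw [hZ.val_concat, hZ.val_zero, add_zero, hZ.val_quad ht hcP]

lemma eventually_exists_isPLQ_val_le (hZ : AdmissibleVal Z) (hpos : ∀ k, 0 < (p k).length)
    (hlength : Tendsto (fun k => (p k).length) atTop (𝓝 0)) (ht : 0 ≤ t)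
    (hslope : Tendsto (fun k => (p k).slope / (p k).length) atTop (𝓝 t)) (hε : 0 < ε) :
    ∀ᶠ k in atTop, ∃ q : ConvexPiece, q.length = (p k).length ∧ q.slope = (p k).slope ∧
      IsPLQ q.toEReal ∧ Z (p k).toEReal ≤ Z q.toEReal + ε * (p k).length := by
  set ζ := Z (quad t 1 ht zero_le_one).toEReal
  have hζ : 0 ≤ ζ := hZ.val_toEReal_nonneg _
  have hζε : 0 < ζ + ε := by linarith
  obtain ⟨c, hc, hc₁, hcζ⟩ : ∃ c, 0 ≤ c ∧ c < 1 ∧ ζ < c * ζ + ε := by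
    have hlt : ζ / (ζ + ε) < 1 := (div_lt_one hζε).2 (by linarith)
    refine ⟨ζ / (ζ + ε), div_nonneg hζ hζε.le, hlt, ?_⟩
    linarith [div_mul_cancel₀ ζ hζε.ne', mul_lt_of_lt_one_left hε hlt]
  have htc : ∀ᶠ k in atTop, t * c ≤ (p k).slope / (p k).length := by
    rcases ht.eq_or_lt with rfl | htpos
    · refine Eventually.of_forall fun k => ?_
      rw [zero_mul]
      exact div_nonneg (p k).slope_nonneg (p k).length_nonneg
    · exact hslope.eventually (Ici_mem_nhds (mul_lt_of_lt_one_right htpos hc₁))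
  filter_upwards [htc, hZ.eventually_val_lt_mul_length hpos hlength ht hslope hcζ] with k hk hlt
  rw [le_div_iff₀ (hpos k), mul_assoc] at hk
  obtain ⟨q, hq, hq', hqPLQ, hqZ⟩ := hZ.exists_isPLQ_val_eq (p k) ht ⟨hc, hc₁.le⟩ hk
  exact ⟨q, hq, hq', hqPLQ, by rw [hqZ]; linarith⟩

lemma exists_pos_forall_exists_isPLQ_val_le (hZ : AdmissibleVal Z) (M : ℝ) (hε : 0 < ε) :
    ∃ δ > 0, ∀ P : ConvexPiece, P.length < δ → P.slope ≤ M * P.length →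
      ∃ Q : ConvexPiece, Q.length = P.length ∧ Q.slope = P.slope ∧ IsPLQ Q.toEReal ∧
        Z P.toEReal ≤ Z Q.toEReal + ε * P.length := by
  by_contra! hcon
  choose p hlength hslope hp using fun k : ℕ =>
    hcon _ (Nat.one_div_pos_of_nat (α := ℝ) (n := k))
  have hpos (k : ℕ) : 0 < (p k).length := by
    refine (p k).length_nonneg.lt_of_ne fun hzero => ?_
    have := hp k (zero _ _ (p k).length_nonneg (p k).slope_nonneg) rfl rfl (isPLQ_zero _ _)
    simp [hZ.val_zero, hZ.val_eq_zero_of_length_eq_zero hzero.symm, ← hzero] at this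
  have hlim : Tendsto (fun k => (p k).length) atTop (𝓝 0) :=
    squeeze_zero (fun k => (hpos k).le) (fun k => (hlength k).le)
      tendsto_one_div_add_atTop_nhds_zero_nat
  have hmem (k : ℕ) : (p k).slope / (p k).length ∈ Icc 0 M :=
    ⟨div_nonneg (p k).slope_nonneg (hpos k).le, (div_le_iff₀ (hpos k)).2 (hslope k)⟩
  obtain ⟨t, ht, φ, hφ, hφt⟩ := isCompact_Icc.tendsto_subseq hmem
  obtain ⟨k, q, hq, hq', hqPLQ, hqZ⟩ := (hZ.eventually_exists_isPLQ_val_le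
    (fun k => hpos (φ k)) (hlim.comp hφ.tendsto_atTop) ht.1 hφt hε).exists
  exact (hp (φ k) q hq hq' hqPLQ).not_ge hqZ

-- The flat zero piece is used for the parts of `P` that are too steep for the local comparison;
-- these parts make up `B`.
lemma exists_close_isPLQ_val_le_add {M η : ℝ} (hZ : AdmissibleVal Z) (hη : 0 < η) (hε : 0 ≤ ε)
    (hlocal : ∀ P : ConvexPiece, P.length ≤ η → P.slope ≤ M * P.length →
      ∃ Q : ConvexPiece, Q.length = P.length ∧ Q.slope = P.slope ∧ IsPLQ Q.toEReal ∧
        Z P.toEReal ≤ Z Q.toEReal + ε * P.length) (P : ConvexPiece) :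
    ∃ Q B : ConvexPiece, Close Q P (η * P.slope) ∧ IsPLQ Q.toEReal ∧ M * B.length ≤ B.slope ∧
      B.slope ≤ P.slope ∧ Z P.toEReal ≤ Z Q.toEReal + ε * P.length + Z B.toEReal := by
  have hclose {P Q : ConvexPiece} (hP : P.length ≤ η) (hlength : Q.length = P.length)
      (hslope : Q.slope = P.slope) : Close Q P (η * P.slope) :=
    (Close.of_eq hlength hslope).mono (mul_le_mul_of_nonneg_right hP P.slope_nonneg)
  have hclose_zero {P : ConvexPiece} (hP : P.length ≤ η) :
      Close (zero P.length P.slope P.length_nonneg P.slope_nonneg) P (η * P.slope) :=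
    hclose hP rfl rfl
  induction P using induction_on_small hη with
  | base P hP =>
    refine ⟨zero P.length P.slope P.length_nonneg P.slope_nonneg, zero 0 0 le_rfl le_rfl,
      hclose_zero (hP.trans_le hη.le), isPLQ_zero _ _, (mul_zero M).le, P.slope_nonneg, ?_⟩
    simp [hZ.val_zero, hZ.val_eq_zero_of_length_eq_zero hP, hP]
  | step P P' hP ih =>
    obtain ⟨Q', B', hQ', hPLQ', hB', hBP', hZ'⟩ := ih
    simp only [hZ.val_concat, concat_length, concat_slope, mul_add]
    rcases le_or_gt P.slope (M * P.length) with hM | hM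
    · obtain ⟨Q, hlength, hslope, hPLQ, hPQ⟩ := hlocal P hP hM
      refine ⟨Q.concat Q', B', (hclose hP hlength hslope).concat hQ', isPLQ_concat hPLQ hPLQ', hB',
        hBP'.trans (le_add_of_nonneg_left P.slope_nonneg), ?_⟩
      rw [hZ.val_concat]
      linarith
    · refine ⟨(zero P.length P.slope P.length_nonneg P.slope_nonneg).concat Q', P.concat B',
        (hclose_zero hP).concat hQ', isPLQ_concat (isPLQ_zero _ _) hPLQ', ?_, ?_, ?_⟩
      · simp only [concat_length, concat_slope, mul_add]
        exact add_le_add hM.le hB'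
      · exact add_le_add le_rfl hBP'
      · rw [hZ.val_concat, hZ.val_concat, hZ.val_zero]
        linarith [mul_nonneg hε P.length_nonneg]

lemma exists_close_isPLQ_val_le (hZ : AdmissibleVal Z) (P : ConvexPiece) (hε : 0 < ε) :
    ∃ Q : ConvexPiece, Close Q P ε ∧ IsPLQ Q.toEReal ∧ Z P.toEReal ≤ Z Q.toEReal + ε := by
  have hlength : 0 < P.length + 1 := by linarith [P.length_nonneg]
  have hslope : 0 < P.slope + 1 := by linarith [P.slope_nonneg]
  set ε' := ε / 2 / (P.length + 1) with hε'
  have hε'P : ε' * P.length ≤ ε / 2 := by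
    rw [hε', div_mul_eq_mul_div, div_le_iff₀ hlength]
    linarith
  obtain ⟨δ, hδ, hsmall⟩ := hZ.exists_pos_forall_val_le P.slope (half_pos hε)
  obtain ⟨η₀, hη₀, hlocal⟩ := hZ.exists_pos_forall_exists_isPLQ_val_le ((P.slope + 1) / δ)
    (div_pos (half_pos hε) hlength)
  set η := min (η₀ / 2) (ε / (P.slope + 1))
  have hη : 0 < η := by positivity
  have hηε : η * P.slope ≤ ε := by
    have := (le_div_iff₀ hslope).1 (min_le_right (η₀ / 2) (ε / (P.slope + 1)))
    linarith
  have hηη₀ : η < η₀ := (min_le_left _ _).trans_lt (half_lt_self hη₀)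
  obtain ⟨Q, B, hQP, hQ, hB, hBP, hPQ⟩ := hZ.exists_close_isPLQ_val_le_add hη
    (by positivity) (fun P' hP' => hlocal P' (hP'.trans_lt hηη₀)) P
  refine ⟨Q, hQP.mono hηε, hQ, ?_⟩
  have hBδ : B.length < δ := by
    have := hB.trans hBP
    rw [div_mul_eq_mul_div, div_le_iff₀ hδ] at this
    exact lt_of_mul_lt_mul_left (by linarith) hslope.le
  linarith [hsmall B hBδ hBP]

lemma exists_close_isPLQ_tendsto_val (hZ : AdmissibleVal Z) (P : ConvexPiece) :
    ∃ Q : ℕ → ConvexPiece, (∀ k : ℕ, Close (Q k) P (1 / (k + 1))) ∧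
      (∀ k, IsPLQ (Q k).toEReal) ∧ Tendsto (fun k => Z (Q k).toEReal) atTop (𝓝 (Z P.toEReal)) := by
  choose Q hQP hQ hPQ using fun k : ℕ =>
    hZ.exists_close_isPLQ_val_le P (Nat.one_div_pos_of_nat (α := ℝ) (n := k))
  have hlim := tendsto_one_div_add_atTop_nhds_zero_nat (𝕜 := ℝ)
  refine ⟨Q, hQP, hQ, tendsto_order.2 ⟨fun c hc => ?_, fun c hc =>
    hZ.eventually_val_lt ((ConvergesTo.const P).of_close hQP hlim) hc⟩⟩
  filter_upwards [hlim.eventually (gt_mem_nhds (sub_pos.2 hc))] with k hk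
  linarith [hPQ k]

end AdmissibleVal

/-! ### Functions in `LC` as continuous functions on an interval -/

namespace IsLC

variable {u : E → EReal} {f : E → ℝ} {x : E}

lemma coe_toRealFn (hu : IsLC u) (hx : x ∈ edom u) : (toRealFn u x : EReal) = u x :=
  EReal.coe_toReal hx.ne (hu.2.2.1 x)

lemma eq_extendTop (hu : IsLC u) (hf : EqOn f (toRealFn u) (edom u)) :
    u = extendTop f (edom u) := by
  funext x
  by_cases hx : x ∈ edom u
  · rw [extendTop_of_mem f hx, hf hx, hu.coe_toRealFn hx]
  · rw [extendTop_of_notMem f hx]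
    exact not_lt_top_iff.1 hx

lemma convexOn_toRealFn (hu : IsLC u) : ConvexOn ℝ (edom u) (toRealFn u) := by
  have hle {x y : E} (hx : x ∈ edom u) (hy : y ∈ edom u) {s t : ℝ} (hs : 0 < s) (ht : 0 < t)
      (hst : s + t = 1) :
      u (s • x + t • y) ≤ ((s * toRealFn u x + t * toRealFn u y : ℝ) : EReal) := by
    have h := hu.1 x y s hs (by linarith)
    rwa [← hu.coe_toRealFn hx, ← hu.coe_toRealFn hy, ← eq_sub_of_add_eq' hst, ← EReal.coe_mul,
      ← EReal.coe_mul, ← EReal.coe_add] at h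
  have hconv : Convex ℝ (edom u) := convex_iff_forall_pos.2 fun x hx y hy s t hs ht hst =>
    (hle hx hy hs ht hst).trans_lt (EReal.coe_lt_top _)
  refine convexOn_iff_forall_pos.2 ⟨hconv, fun x hx y hy s t hs ht hst => ?_⟩
  rw [← EReal.coe_le_coe_iff, hu.coe_toRealFn (hconv hx hy hs.le ht.le hst)]
  exact hle hx hy hs ht hst

-- Along a segment from `x` into the interior, convexity bounds the limit of `u` by `u x` from
-- above, and lower semicontinuity bounds it from below.
lemma eqOn_toRealFn (hu : IsLC u) (hf : Continuous f) (hne : (interior (edom u)).Nonempty)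
    (hfu : EqOn f (toRealFn u) (interior (edom u))) : EqOn f (toRealFn u) (edom u) := by
  intro x hx
  obtain ⟨c, hc⟩ := hne
  have hmem : ∀ᶠ t : ℝ in 𝓝[>] 0, t < 1 ∧ x + t • (c - x) ∈ interior (edom u) := by
    filter_upwards [Ioo_mem_nhdsGT one_pos] with t ht
    exact ⟨ht.2, hu.convexOn_toRealFn.1.add_smul_sub_mem_interior hx hc ⟨ht.1, ht.2.le⟩⟩
  have hpath : Tendsto (fun t : ℝ => x + t • (c - x)) (𝓝[>] 0) (𝓝 x) := by
    have : Continuous fun t : ℝ => x + t • (c - x) := by fun_prop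
    simpa only [zero_smul, add_zero] using (this.tendsto 0).mono_left nhdsWithin_le_nhds
  have hlim := (hf.tendsto x).comp hpath
  apply le_antisymm
  · have hchord : Tendsto (fun t : ℝ => (1 - t) * toRealFn u x + t * toRealFn u c) (𝓝[>] 0)
        (𝓝 (toRealFn u x)) := by
      have : Continuous fun t : ℝ => (1 - t) * toRealFn u x + t * toRealFn u c := by fun_prop
      simpa only [sub_zero, one_mul, zero_mul, add_zero] using
        (this.tendsto 0).mono_left nhdsWithin_le_nhds
    refine le_of_tendsto_of_tendsto hlim hchord ?_
    filter_upwards [hmem, self_mem_nhdsWithin] with t ht ht₀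
    have hcombo : (1 - t) • x + t • c = x + t • (c - x) := by module
    have := hu.convexOn_toRealFn.2 hx (interior_subset hc) (sub_nonneg.2 ht.1.le) (le_of_lt ht₀)
      (sub_add_cancel 1 t)
    rwa [hcombo, ← hfu ht.2] at this
  · refine le_of_forall_lt_imp_le_of_dense fun r hr => ge_of_tendsto hlim ?_
    rw [← EReal.coe_lt_coe_iff, hu.coe_toRealFn hx] at hr
    filter_upwards [hmem, hpath.eventually (hu.2.1 x r hr)] with t ht hrt
    rw [← hu.coe_toRealFn (interior_subset ht.2), gt_iff_lt, EReal.coe_lt_coe_iff,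
      ← hfu ht.2] at hrt
    exact hrt.le

lemma exists_lipschitzWith_eqOn_toRealFn (hu : IsLC u) (hne : (interior (edom u)).Nonempty) :
    ∃ (f : E → ℝ) (K : NNReal), LipschitzWith K f ∧ EqOn f (toRealFn u) (edom u) := by
  obtain ⟨L, hL, hlip⟩ := hu.2.2.2.2.2
  obtain ⟨f, hf, hfu⟩ := (LipschitzOnWith.of_dist_le_mul (K := ⟨L, hL.le⟩) (f := toRealFn u)
    (s := interior (edom u)) fun x hx y hy => by
      rw [Real.dist_eq, dist_eq_norm]
      exact hlip x hx y hy).extend_real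
  exact ⟨f, _, hf, hu.eqOn_toRealFn hf.continuous hne hfu.symm⟩

end IsLC

section LeftDeriv

variable {f : ℝ → ℝ} {s : Set ℝ}

lemma add_leftDeriv_mul_sub_le (hf : ConvexOn ℝ s f) {x y : ℝ} (hx : x ∈ interior s)
    (hy : y ∈ s) : f x + derivWithin f (Iio x) x * (y - x) ≤ f y := by
  rcases lt_trichotomy y x with hyx | rfl | hxy
  · have := hf.slope_le_leftDeriv_of_mem_interior hy hx hyx
    rw [slope_def_field, div_le_iff₀ (sub_pos.2 hyx)] at this
    linarith
  · simp
  · have := (hf.leftDeriv_le_rightDeriv_of_mem_interior hx).trans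
      (hf.rightDeriv_le_slope_of_mem_interior hx hy hxy)
    rw [slope_def_field, le_div_iff₀ (sub_pos.2 hxy)] at this
    linarith

lemma HasSubgradientsIn.of_convexOn_of_lipschitzOnWith {K : NNReal} (hf : ConvexOn ℝ s f)
    (hK : LipschitzOnWith K f s) : HasSubgradientsIn f s (Icc (-K) K) := by
  have hlip {x y : ℝ} (hx : x ∈ s) (hy : y ∈ s) (hxy : x ≤ y) :
      -(K * (y - x)) ≤ f y - f x ∧ f y - f x ≤ K * (y - x) := by
    have := hK.dist_le_mul y hy x hx
    rwa [Real.dist_eq, Real.dist_eq, abs_of_nonneg (sub_nonneg.2 hxy), abs_le] at this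
  intro x hx
  by_cases hleft : ∀ y ∈ s, x ≤ y
  · exact ⟨-K, left_mem_Icc.2 (neg_le_self K.2), fun y hy => by
      linarith [(hlip hx hy (hleft y hy)).1]⟩
  by_cases hright : ∀ y ∈ s, y ≤ x
  · exact ⟨K, right_mem_Icc.2 (neg_le_self K.2), fun y hy => by
      linarith [(hlip hy hx (hright y hy)).2]⟩
  push Not at hleft hright
  obtain ⟨z, hz, hzx⟩ := hleft
  obtain ⟨w, hw, hxw⟩ := hright
  have hint : x ∈ interior s := mem_interior_iff_mem_nhds.2 <|
    mem_of_superset (Icc_mem_nhds hzx hxw) (hf.1.ordConnected.out hz hw)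
  refine ⟨derivWithin f (Iio x) x, ⟨?_, ?_⟩, fun y hy => add_leftDeriv_mul_sub_le hf hint hy⟩
  · refine le_of_mul_le_mul_right ?_ (sub_pos.2 hzx)
    linarith [(hlip hz hx hzx.le).1, add_leftDeriv_mul_sub_le hf hint hz]
  · refine le_of_mul_le_mul_right ?_ (sub_pos.2 hxw)
    linarith [(hlip hx hw hxw.le).2, add_leftDeriv_mul_sub_le hf hint hw]

end LeftDeriv

lemma IsLC.exists_eq_extendTop_Icc {u : ℝ → EReal} (hu : IsLC u) :
    ∃ (a b M : ℝ) (f : ℝ → ℝ), a ≤ b ∧ HasSubgradientsIn f (Icc a b) (Icc (-M) M) ∧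
      Continuous f ∧ u = extendTop f (Icc a b) := by
  have hne : (edom u).Nonempty := hu.2.2.2.1.imp fun _ => lt_top_iff_ne_top.2
  obtain ⟨a, b, hdom⟩ : ∃ a b, edom u = Icc a b :=
    ⟨_, _, eq_Icc_of_connected_compact ⟨hne, hu.convexOn_toRealFn.1.isPreconnected⟩
      hu.2.2.2.2.1⟩
  have hab : a ≤ b := nonempty_Icc.1 (hdom ▸ hne)
  obtain ⟨f, K, hK, hfu⟩ : ∃ (f : ℝ → ℝ) (K : NNReal), LipschitzWith K f ∧
      EqOn f (toRealFn u) (edom u) := by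
    rcases hab.eq_or_lt with rfl | hlt
    · refine ⟨fun _ => toRealFn u a, 0, LipschitzWith.const _, fun x hx => ?_⟩
      rw [hdom, Icc_self, mem_singleton_iff] at hx
      rw [hx]
    · exact hu.exists_lipschitzWith_eqOn_toRealFn
        (by rwa [hdom, interior_Icc, nonempty_Ioo])
  refine ⟨a, b, K, f, hab, hdom ▸ ?_, hK.continuous, hdom ▸ hu.eq_extendTop hfu⟩
  exact .of_convexOn_of_lipschitzOnWith (hu.convexOn_toRealFn.congr hfu.symm) hK.lipschitzOnWith

/-! ### Approximation of functions in `LC(ℝ)` -/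

namespace AdmissibleVal

variable {Z : (ℝ → EReal) → ℝ}

lemma exists_isPLQ_tendsto_val (hZ : AdmissibleVal Z) {f : ℝ → ℝ} {a b m M : ℝ}
    (hf : HasSubgradientsIn f (Icc a b) (Icc m M)) (hcont : Continuous f) (hab : a ≤ b) :
    ∃ g : ℕ → ℝ → ℝ, (∀ k, HasSubgradientsIn (g k) (Icc a b) (Icc m M)) ∧
      (∀ k : ℕ, ∀ x ∈ Icc a b, |g k x - f x| ≤ 1 / (k + 1)) ∧
      (∀ k, IsPLQ (extendTop (g k) (Icc a b))) ∧
      Tendsto (fun k => Z (extendTop (g k) (Icc a b))) atTop (𝓝 (Z (extendTop f (Icc a b)))) := by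
  obtain ⟨P, hlength, hslope, hP⟩ := ConvexPiece.exists_affineShift_eq hf hcont hab
  obtain ⟨Q, hQP, hQ, hlim⟩ := hZ.exists_close_isPLQ_tendsto_val P
  have hIcc (R : ConvexPiece) (hR : R.length = P.length) :
      Icc (0 + a) (R.length + a) = Icc a b := by
    rw [hR, hlength, zero_add, sub_add_cancel]
  have hval (R : ConvexPiece) (hR : R.length = P.length) :
      Z (extendTop (affineShift R a m (f a - m * a)) (Icc a b)) = Z R.toEReal := by
    rw [← hIcc R hR]
    exact hZ.val_affineShift R.subgradients R.length_nonneg _ _ _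
  refine ⟨fun k => affineShift (Q k) a m (f a - m * a), fun k => ?_, fun k x hx => ?_,
    fun k => ?_, ?_⟩
  · have := (Q k).subgradients.affineShift a m (f a - m * a)
    rwa [hIcc _ (hQP k).length_eq, (hQP k).slope_eq, hslope, zero_add, sub_add_cancel] at this
  · have := (hQP k).abs_sub_le (x - a)
      ⟨sub_nonneg.2 hx.1, hlength ▸ sub_le_sub_right hx.2 a⟩
    rw [← congr_fun hP x]
    simpa only [affineShift, add_sub_add_right_eq_sub] using this
  · rw [← hIcc _ (hQP k).length_eq]
    exact isPLQ_extendTop_affineShift (hQ k) (Q k).subgradients (Q k).length_nonneg _ _ _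
  · simp only [hval _ (hQP _).length_eq]
    rwa [← hval P rfl, hP] at hlim

lemma exists_isPLQ_tauConv_tendsto (hZ : AdmissibleVal Z) {u : ℝ → EReal} (hu : IsLC u) :
    ∃ v : ℕ → ℝ → EReal, (∀ k, IsPLQ (v k)) ∧ TauConv v u ∧
      Tendsto (fun k => Z (v k)) atTop (𝓝 (Z u)) := by
  obtain ⟨a, b, M, f, hab, hf, hcont, rfl⟩ := hu.exists_eq_extendTop_Icc
  obtain ⟨g, hg, hgf, hgPLQ, hlim⟩ := hZ.exists_isPLQ_tendsto_val hf hcont hab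
  exact ⟨_, hgPLQ, tauConv_extendTop (fun _ => hab) tendsto_const_nhds tendsto_const_nhds hcont
    tendsto_one_div_add_atTop_nhds_zero_nat hgf hg hu, hlim⟩

end AdmissibleVal

end

/-- Let `Z` be a simple, τ-upper semicontinuous, translation and dually
epi-translation invariant valuation on `LC(ℝ)` vanishing on indicators of closed intervals.
Then `Z(u) = sup { limsup_n Z(v_n) : v_n ∈ PLQ(ℝ), v_n τ-converges to u }` for every
`u ∈ LC(ℝ)`. -/
theorem stmt17 (Z : (ℝ → EReal) → ℝ)
    (hval : IsVal Z) (husc : TauUSC Z) (htrans : TransInv Z) (hdual : DualTransInv Z)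
    (hsimple : ∀ u : ℝ → EReal, IsLC u → (∃ x : ℝ, edom u = {x}) → Z u = 0)
    (hvanish : ∀ a b : ℝ, a ≤ b → Z (eIndicator (Set.Icc a b)) = 0) :
    ∀ u : ℝ → EReal, IsLC u →
      Z u = sSup {c : ℝ | ∃ v : ℕ → ℝ → EReal, (∀ k, IsPLQ (v k)) ∧ TauConv v u ∧
        c = limsup (fun k => Z (v k)) atTop} := by
  have hZ : AdmissibleVal Z := ⟨hval, husc, htrans, hdual, hsimple, hvanish⟩
  intro u hu
  obtain ⟨v, hvPLQ, hvu, hlim⟩ := hZ.exists_isPLQ_tauConv_tendsto hu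
  symm
  refine IsGreatest.csSup_eq ⟨⟨v, hvPLQ, hvu, hlim.limsup_eq.symm⟩, ?_⟩
  rintro _ ⟨w, -, hwu, rfl⟩
  exact husc w u hwu

end
end
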